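/- Let D be a regular domain and let 1 ≤ p < q ≤ m be thresholds such that D is a (p, q)-hybrid* domain. Then a RSCF φ : D^n → Δ(A) is unanimous and strategy-proof if and only if φ is a PFBR and, moreover, a (p, q)-PFBR in the case q − p > 1. -/

import Mathlib

open Finset

noncomputable section

/-- A preference is a linear order over the `m` alternatives, represented as a bijection
from rank positions (0-based: position `0` is the top) to alternatives. -/
abbrev Pref (m : ℕ) := Fin m ≃ Fin m

namespace PFBRPaper

variable {m n : ℕ}

/-- `a` is strictly preferred to `b` under `P`. -/
def Prefers (P : Pref m) (a b : Fin m) : Prop := P.symm a < P.symm b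

/-- The last alternative `a_m` (0-based index `m-1`). -/
def lastAlt (m : ℕ) [NeZero m] : Fin m :=
  ⟨m - 1, Nat.sub_lt (Nat.pos_of_ne_zero (NeZero.ne m)) Nat.one_pos⟩

/-- Every alternative is top-ranked by some preference in the domain. -/
def MinimallyRich [NeZero m] (D : Set (Pref m)) : Prop :=
  ∀ a : Fin m, ∃ P ∈ D, P 0 = a

/-- The preference ranking `a_m` first, ..., `a_1` last. -/
def revPref (m : ℕ) : Pref m :=
  ⟨Fin.rev, Fin.rev, fun i => Fin.rev_rev i, fun i => Fin.rev_rev i⟩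

/-- Diversity, with the labeling convention: the domain contains the preference ranking
`a_1` first, `a_2` second, ..., `a_m` last (the identity), together with its
complete reversal. -/
def Diversity (D : Set (Pref m)) : Prop :=
  Equiv.refl (Fin m) ∈ D ∧ revPref m ∈ D

/-- Two preferences are adjacent: the alternatives at two contiguous rank positions are
swapped and everything else is unchanged. -/
def Adjacent (P P' : Pref m) : Prop :=
  P ≠ P' ∧ ∃ k : ℕ, ∃ hk : k + 1 < m,
    P ⟨k, Nat.lt_of_succ_lt hk⟩ = P' ⟨k + 1, hk⟩ ∧
    P ⟨k + 1, hk⟩ = P' ⟨k, Nat.lt_of_succ_lt hk⟩ ∧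
    ∀ l : Fin m, (l : ℕ) ≠ k → (l : ℕ) ≠ k + 1 → P l = P' l

/-- `π 0, …, π (v-1)` is a path in `D` connecting `P` and `P'`. -/
def IsPath (D : Set (Pref m)) (P P' : Pref m) (π : ℕ → Pref m) (v : ℕ) : Prop :=
  1 ≤ v ∧ (∀ i < v, π i ∈ D) ∧
  (∀ i < v, ∀ j < v, π i = π j → i = j) ∧
  π 0 = P ∧ π (v - 1) = P' ∧
  ∀ i, i + 1 < v → Adjacent (π i) (π (i + 1))

/-- The path `π 0, …, π (v-1)` has no `{a,b}`-restoration: the relative ranking of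
`a` and `b` switches at most once along the path. -/
def NoRestoration (π : ℕ → Pref m) (v : ℕ) (a b : Fin m) : Prop :=
  ∀ i j k : ℕ, i < j → j < k → k < v →
    ¬(Prefers (π i) a b ∧ Prefers (π j) b a ∧ Prefers (π k) a b) ∧
    ¬(Prefers (π i) b a ∧ Prefers (π j) a b ∧ Prefers (π k) b a)

def NoRestorationDomain (D : Set (Pref m)) : Prop :=
  ∀ P ∈ D, ∀ P' ∈ D, P ≠ P' → ∀ a b : Fin m,
    ∃ π v, IsPath D P P' π v ∧ NoRestoration π v a b

def RegularDomain [NeZero m] (D : Set (Pref m)) : Prop :=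
  MinimallyRich D ∧ Diversity D ∧ NoRestorationDomain D

/-- `a ≈ b`: the two alternatives are strongly connected in the domain `D`. -/
def StronglyConnected [NeZero m] (D : Set (Pref m)) (a b : Fin m) : Prop :=
  a ≠ b ∧ ∃ P ∈ D, ∃ P' ∈ D,
    P 0 = a ∧ P 1 = b ∧ P' 0 = b ∧ P' 1 = a ∧
    ∀ k : Fin m, 2 ≤ (k : ℕ) → P k = P' k

/-- `l` is a vertex-path of the graph `G_≈^B(D)`. -/
def IsVertexPathOn [NeZero m] (D : Set (Pref m)) (B : Set (Fin m)) (l : List (Fin m)) : Prop :=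
  l ≠ [] ∧ l.Nodup ∧ (∀ x ∈ l, x ∈ B) ∧ l.Chain' (StronglyConnected D)

/-- `l` is a vertex-path of `G_≈^B(D)` connecting `a` and `b`. -/
def VertexPathBetween [NeZero m] (D : Set (Pref m)) (B : Set (Fin m)) (a b : Fin m)
    (l : List (Fin m)) : Prop :=
  IsVertexPathOn D B l ∧ l.head? = some a ∧ l.getLast? = some b

/-- `a` is a leaf of the subgraph `G_≈^B(D)`. -/
def IsLeaf [NeZero m] (D : Set (Pref m)) (B : Set (Fin m)) (a : Fin m) : Prop :=
  a ∈ B ∧ ∃! b : Fin m, b ∈ B ∧ StronglyConnected D a b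

/-- Single-peakedness w.r.t. the natural order. -/
def SinglePeaked [NeZero m] (P : Pref m) : Prop :=
  ∀ a b : Fin m, ((a < b ∧ b < P 0) ∨ (P 0 < b ∧ b < a)) → Prefers P b a

/-- A `(p,q)`-hybrid preference (thresholds `p < q`, 0-based). -/
def IsHybridPref [NeZero m] (p q : Fin m) (P : Pref m) : Prop :=
  (∀ r s : Fin m, ((r ≤ p ∧ s ≤ p) ∨ (q ≤ r ∧ q ≤ s)) →
      ((r < s ∧ s < P 0) ∨ (P 0 < s ∧ s < r)) → Prefers P s r) ∧
  (P 0 ≤ p → ∀ l : Fin m, p ≤ l → l ≤ q → l ≠ p → Prefers P p l) ∧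
  (q ≤ P 0 → ∀ l : Fin m, p ≤ l → l ≤ q → l ≠ q → Prefers P q l)

/-- The `(p,q)`-hybrid domain of all `(p,q)`-hybrid preferences. -/
def hybridDomain [NeZero m] (p q : Fin m) : Set (Pref m) := {P | IsHybridPref p q P}

/-- `D` is a `(p,q)`-hybrid* domain. -/
def IsHybridStar [NeZero m] (D : Set (Pref m)) (p q : Fin m) : Prop :=
  D ⊆ hybridDomain p q ∧
  (∀ k : Fin m, k ≠ 0 → k ≠ lastAlt m →
      ∃ l, VertexPathBetween D Set.univ 0 (lastAlt m) l ∧ k ∈ l) ∧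
  ((p : ℕ) + 1 < (q : ℕ) → ∀ a : Fin m, ¬ IsLeaf D (Set.Icc p q) a)

/-- A lottery over the alternatives. -/
def Lottery (m : ℕ) : Type :=
  {f : Fin m → ℝ // (∀ a, 0 ≤ f a) ∧ ∑ a, f a = 1}

/-- The probability that a lottery assigns to a set of alternatives. -/
def Lottery.prob (lam : Lottery m) (B : Finset (Fin m)) : ℝ := ∑ a ∈ B, lam.1 a

/-- The support of a lottery. -/
def Lottery.supp (lam : Lottery m) : Finset (Fin m) :=
  Finset.univ.filter (fun a => 0 < lam.1 a)

/-- The degenerate lottery on `a`. -/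
def degLottery (a : Fin m) : Lottery m :=
  ⟨fun b => if b = a then 1 else 0,
   fun b => by by_cases h : b = a <;> simp [h],
   by simp⟩

/-- A profile of preferences drawn from the domain `D`. -/
abbrev Profile (D : Set (Pref m)) (n : ℕ) := Fin n → D

/-- The top-ranked alternative of a preference in the domain. -/
def topOf [NeZero m] {D : Set (Pref m)} (P : D) : Fin m := P.1 0

def Unanimous [NeZero m] {D : Set (Pref m)} (φ : Profile D n → Lottery m) : Prop :=
  ∀ (P : Profile D n) (a : Fin m), (∀ i, topOf (P i) = a) → φ P = degLottery a

/-- The total probability of the `k` top-ranked alternatives of `P` under `lam`. -/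
def topSum (lam : Lottery m) (P : Pref m) (k : ℕ) : ℝ :=
  ∑ t ∈ Finset.univ.filter (fun t : Fin m => (t : ℕ) < k), lam.1 (P t)

/-- Strategy-proofness: truth-telling first-order stochastically dominates any unilateral
misrepresentation. -/
def StrategyProof {D : Set (Pref m)} (φ : Profile D n → Lottery m) : Prop :=
  ∀ (i : Fin n) (P : Profile D n) (Pi' : D) (k : ℕ), k ≤ m →
    topSum (φ (Function.update P i Pi')) (P i).1 k ≤ topSum (φ P) (P i).1 k

def TopsOnly [NeZero m] {D : Set (Pref m)} (φ : Profile D n → Lottery m) : Prop :=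
  ∀ P P' : Profile D n, (∀ i, topOf (P i) = topOf (P' i)) → φ P = φ P'

def Anonymous {D : Set (Pref m)} (φ : Profile D n → Lottery m) : Prop :=
  ∀ (P : Profile D n) (σ : Equiv.Perm (Fin n)), φ (P ∘ σ) = φ P

/-- The interval `[a_k, a_m]`. -/
def upSet (k : Fin m) : Finset (Fin m) := Finset.univ.filter (fun a => k ≤ a)

/-- The interval `[a_1, a_k]`. -/
def downSet (k : Fin m) : Finset (Fin m) := Finset.univ.filter (fun a => a ≤ k)

/-- The interval `[a_p, a_q]`. -/
def midSet (p q : Fin m) : Finset (Fin m) := Finset.univ.filter (fun a => p ≤ a ∧ a ≤ q)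

/-- `S(k,P)`: the voters whose preference top is not to the left of `a_k`. -/
def voterSet [NeZero m] {D : Set (Pref m)} (P : Profile D n) (k : Fin m) : Finset (Fin n) :=
  Finset.univ.filter (fun i => k ≤ topOf (P i))

/-- `β_{S(k,P)}([a_k, a_m])`, with the convention that it is `0` for `k = m`. -/
def tailProb [NeZero m] {D : Set (Pref m)} (β : Finset (Fin n) → Lottery m)
    (P : Profile D n) (k : ℕ) : ℝ :=
  if h : k < m then (β (voterSet P ⟨k, h⟩)).prob (upSet ⟨k, h⟩) else 0

def BallotUnanimity [NeZero m] (β : Finset (Fin n) → Lottery m) : Prop :=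
  β Finset.univ = degLottery (lastAlt m) ∧ β ∅ = degLottery 0

def BallotMonotone (β : Finset (Fin n) → Lottery m) : Prop :=
  ∀ S T : Finset (Fin n), S ⊂ T →
    ∀ k : Fin m, (β S).prob (upSet k) ≤ (β T).prob (upSet k)

/-- `φ` is a probabilistic fixed ballot rule with probabilistic ballots `β`. -/
def IsPFBRWith [NeZero m] {D : Set (Pref m)} (φ : Profile D n → Lottery m)
    (β : Finset (Fin n) → Lottery m) : Prop :=
  BallotUnanimity β ∧ BallotMonotone β ∧
  ∀ (P : Profile D n) (k : Fin m),
    (φ P).1 k = tailProb β P (k : ℕ) - tailProb β P ((k : ℕ) + 1)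

def IsPFBR [NeZero m] {D : Set (Pref m)} (φ : Profile D n → Lottery m) : Prop :=
  ∃ β, IsPFBRWith φ β

/-- The constrained random-dictatorship condition w.r.t. `a_p` and `a_q`. -/
def ConstrainedRD (p q : Fin m) (β : Finset (Fin n) → Lottery m) : Prop :=
  ∃ ε : Fin n → ℝ, (∀ i, 0 ≤ ε i) ∧ ∑ i, ε i = 1 ∧
    ∀ S : Finset (Fin n),
      (β S).prob (upSet q) = ∑ i ∈ S, ε i ∧
      (β S).prob (downSet p) = ∑ i ∈ Sᶜ, ε i

/-- The constrained random-dictatorship condition w.r.t. `a_p` and `a_q` with every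
conditional dictatorial coefficient equal to `1/n`. -/
def ConstrainedRDUniform (p q : Fin m) (β : Finset (Fin n) → Lottery m) : Prop :=
  ∀ S : Finset (Fin n),
    (β S).prob (upSet q) = (S.card : ℝ) / (n : ℝ) ∧
    (β S).prob (downSet p) = ((Sᶜ : Finset (Fin n)).card : ℝ) / (n : ℝ)

/-- Anonymity at the level of probabilistic ballots. -/
def BallotAnonymous (β : Finset (Fin n) → Lottery m) : Prop :=
  ∀ S S' : Finset (Fin n), S.Nonempty → S'.Nonempty → S.card = S'.card → β S = β S'

/-- Per-capita monotonicity w.r.t. `a_p` and `a_q`. -/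
def PerCapitaMonotone (p q : Fin m) (β : Finset (Fin n) → Lottery m) : Prop :=
  ∀ S S' : Finset (Fin n), S.Nonempty → S ⊂ S' → S' ⊂ Finset.univ →
    (∀ t : Fin m, q ≤ t →
      (β S).prob (upSet t) / (S.card : ℝ) ≤ (β S').prob (upSet t) / (S'.card : ℝ)) ∧
    (∀ s : Fin m, s ≤ p →
      (β Sᶜ).prob (downSet s) / (S.card : ℝ) ≤ (β S'ᶜ).prob (downSet s) / (S'.card : ℝ))

/-- Decomposability: `φ` is a mixture of finitely many unanimous and strategy-proof
deterministic social choice functions. -/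
def Decomposable [NeZero m] {D : Set (Pref m)} (φ : Profile D n → Lottery m) : Prop :=
  ∃ (r : ℕ) (f : Fin r → (Profile D n → Fin m)) (α : Fin r → ℝ),
    (∀ k, 0 < α k) ∧ ∑ k, α k = 1 ∧
    (∀ k, Unanimous (fun P => degLottery (f k P)) ∧
          StrategyProof (fun P => degLottery (f k P))) ∧
    ∀ (P : Profile D n) (a : Fin m),
      (φ P).1 a = ∑ k, α k * (if f k P = a then 1 else 0)

/-- `b̂_S^R`: the `≺`-minimum of `supp(β_S) ∩ R` (with the convention `b̂_N^R = a_m`). -/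
def bR [NeZero m] (β : Finset (Fin n) → Lottery m) (q : Fin m) (S : Finset (Fin n)) : Fin m :=
  if h : ((β S).supp ∩ upSet q).Nonempty then ((β S).supp ∩ upSet q).min' h else lastAlt m

/-- `b̂_S^L`: the `≺`-maximum of `supp(β_S) ∩ L` (with the convention `b̂_∅^L = a_1`). -/
def bL [NeZero m] (β : Finset (Fin n) → Lottery m) (p : Fin m) (S : Finset (Fin n)) : Fin m :=
  if h : ((β S).supp ∩ downSet p).Nonempty then ((β S).supp ∩ downSet p).max' h else 0

/-- `α = min over nonempty S ⊂ N of min(β_S(b̂_S^R)/|S|, β_S(b̂_S^L)/(n-|S|))`. -/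
def alphaVal [NeZero m] (β : Finset (Fin n) → Lottery m) (p q : Fin m) : ℝ :=
  sInf {x : ℝ | ∃ S : Finset (Fin n), S.Nonempty ∧ S ≠ Finset.univ ∧
    x = min ((β S).1 (bR β q S) / (S.card : ℝ))
            ((β S).1 (bL β p S) / ((n : ℝ) - (S.card : ℝ)))}

/-- `γ_S = (|S|/n) e_{b̂_S^R} + ((n-|S|)/n) e_{b̂_S^L}`, pointwise. -/
def gammaFun [NeZero m] (β : Finset (Fin n) → Lottery m) (p q : Fin m)
    (S : Finset (Fin n)) (a : Fin m) : ℝ :=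
  ((S.card : ℝ) / (n : ℝ)) * (if a = bR β q S then 1 else 0)
  + (((n : ℝ) - (S.card : ℝ)) / (n : ℝ)) * (if a = bL β p S then 1 else 0)

/-- The max-min formula `f(P) = max_{S ⊆ N} min({r_1(P_j) : j ∈ S} ∪ {b_S})`. -/
def fbrOutcome [NeZero m] {D : Set (Pref m)} (b : Finset (Fin n) → Fin m)
    (P : Profile D n) : Fin m :=
  Finset.univ.sup' Finset.univ_nonempty
    (fun S : Finset (Fin n) =>
      (insert (b S) (S.image (fun j => topOf (P j)))).inf' (Finset.insert_nonempty _ _) id)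

/-- `f` is a `(p,q)`-fixed ballot rule with deterministic ballots `b` and constrained
dictator `i`. -/
def IsFBRWith [NeZero m] {D : Set (Pref m)} (p q : Fin m) (f : Profile D n → Fin m)
    (b : Finset (Fin n) → Fin m) (i : Fin n) : Prop :=
  b Finset.univ = lastAlt m ∧ b ∅ = 0 ∧
  (∀ S T : Finset (Fin n), S ⊂ T → b S ≤ b T) ∧
  (∀ S : Finset (Fin n), (i ∈ S → q ≤ b S) ∧ (i ∉ S → b S ≤ p)) ∧
  ∀ P : Profile D n, f P = fbrOutcome b P

end PFBRPaper

open PFBRPaper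

/-!
Under a strategy-proof rule a voter who swaps the adjacent alternatives `x` and `y` changes only
the probabilities of `x` and `y`. By no-restoration, the size of that change depends on the other
voters only through their rankings of `x` and `y`, so that comparison with a unanimous profile
yields tops-onlyness.

A tops-only rule is governed by the graph of strong connectedness. For `k ≤ p` and for `q ≤ k` the
sets `[a_1, a_k]` and `[a_k, a_m]` are attached to their complements through a single vertex, hence
their probabilities depend only on which voters have their tops there. If `M` has more than two
alternatives then it has no leaf, so `a_p` has two neighbours outside `[a_1, a_p]`; this makes the
probability of `[a_1, a_p]` additive over voters, with the conditional dictatorial coefficients as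
weights. The coefficients obtained in the same way at `a_q` agree with them, which determines the
probabilities of all `[a_k, a_m]` with `p < k ≤ q`.

Conversely, summation by parts reduces strategy-proofness of a `(p, q)`-PFBR to comparing the
utilities of neighbouring alternatives outside `M`, and to a single comparison across `M`.
-/

namespace PFBRPaper

section Generalities

theorem eq_of_forall_update_eq {ι α β : Type*} [Finite ι] [DecidableEq ι] {F : (ι → α) → β}
    {r : α → α → Prop}
    (hF : ∀ x i a b, r a b → F (Function.update x i a) = F (Function.update x i b))
    {x y : ι → α} (hxy : ∀ i, r (x i) (y i)) : F x = F y := by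
  cases nonempty_fintype ι
  suffices h : ∀ S : Finset ι, F (S.piecewise y x) = F x by simpa using (h univ).symm
  intro S
  induction S using Finset.induction_on with
  | empty => rw [piecewise_empty]
  | insert i S hi ih =>
    rw [piecewise_insert, ← hF _ i _ _ (hxy i), update_piecewise_of_notMem _ _ _ hi,
      Function.update_eq_self, ih]

theorem eq_of_reachable {V β : Type*} {G : SimpleGraph V} {f : V → β}
    (hf : ∀ a b, G.Adj a b → f a = f b) {a b : V} (h : G.Reachable a b) : f a = f b := by
  rw [SimpleGraph.reachable_iff_reflTransGen] at h
  induction h with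
  | refl => rfl
  | tail _ hadj ih => exact ih.trans (hf _ _ hadj)

theorem eq_sum_of_add_add_eq {ι M : Type*} [Fintype ι] [DecidableEq ι] [AddCommGroup M]
    {A B C : Finset ι → M} {c : M} (hA : A ∅ = 0) (hC : C ∅ = 0)
    (h : ∀ R T, Disjoint R T → A R + B (R ∪ T)ᶜ + C T = c) (S : Finset ι) :
    A S = ∑ i ∈ S, A {i} := by
  have hAB (R) : A R + B Rᶜ = c := by simpa [hC] using h R ∅ (disjoint_empty_right R)
  have hBC (T) : B Tᶜ + C T = c := by simpa [hA] using h ∅ T (disjoint_empty_left T)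
  have hCA (T) : C T = A T :=
    add_left_cancel ((hBC T).trans ((hAB T).symm.trans (add_comm _ _)))
  have hadd (R T) (hRT : Disjoint R T) : A (R ∪ T) = A R + A T := by
    rw [← add_left_inj (B (R ∪ T)ᶜ), hAB, ← h R T hRT, hCA, add_right_comm]
  induction S using Finset.induction_on with
  | empty => simpa using hA
  | insert i S hi ih =>
    rw [sum_insert hi, insert_eq, hadd _ _ (disjoint_singleton_left.2 hi), ih]

theorem eqOn_Icc_of_sub_le_sub {M : Type*} [AddCommGroup M] [PartialOrder M]
    [IsOrderedAddMonoid M] {f g : ℕ → M} {a b : ℕ} (ha : f a = g a) (hb : f b = g b)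
    (h : ∀ k ∈ Set.Ico a b, f k - f (k + 1) ≤ g k - g (k + 1)) : Set.EqOn f g (Set.Icc a b) := by
  have hmono : MonotoneOn (f - g) (Set.Icc a b) := by
    refine monotoneOn_of_le_add_one Set.ordConnected_Icc fun k _ hk hk' => ?_
    have hdrop := h k ⟨hk.1, hk'.2⟩
    rw [sub_le_sub_iff] at hdrop
    exact sub_le_sub_iff.2 (hdrop.trans_eq (add_comm _ _))
  intro k hk
  have hab : a ≤ b := hk.1.trans hk.2
  have hak := hmono ⟨le_rfl, hab⟩ hk hk.1
  have hkb := hmono hk ⟨hab, le_rfl⟩ hk.2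
  simp only [Pi.sub_apply, ha, hb, sub_self] at hak hkb
  exact sub_eq_zero.1 (le_antisymm hkb hak)

theorem sum_mul_sub_succ {R : Type*} [CommRing R] (v d : ℕ → R) (N : ℕ) :
    ∑ k ∈ range N, v k * (d k - d (k + 1))
      = v 0 * d 0 - v N * d N + ∑ k ∈ range N, (v (k + 1) - v k) * d (k + 1) := by
  induction N with
  | zero => simp
  | succ N ih =>
    rw [sum_range_succ, sum_range_succ, ih]
    ring

/-- On `[s, t)` the weights are equal, so that the increments of `v` telescope. -/
theorem sum_sub_mul_nonpos {R : Type*} [Ring R] [PartialOrder R] [IsOrderedRing R]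
    {v d : ℕ → R} {N s t : ℕ} {c : R} (ht : t ≤ N) (hd : ∀ k, 0 ≤ d k)
    (hout : ∀ k, k ∉ Ico s t → (v (k + 1) - v k) * d (k + 1) ≤ 0)
    (hin : ∀ k ∈ Ico s t, d (k + 1) = c) (hv : s < t → v t ≤ v s) :
    ∑ k ∈ range N, (v (k + 1) - v k) * d (k + 1) ≤ 0 := by
  have hsub : Ico s t ⊆ range N := fun k hk => mem_range.2 ((mem_Ico.1 hk).2.trans_le ht)
  rw [← sum_sdiff hsub]
  refine add_nonpos (sum_nonpos fun k hk => hout k (mem_sdiff.1 hk).2) ?_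
  rcases lt_or_ge s t with hst | hts
  · have hc : 0 ≤ c := hin s (left_mem_Ico.2 hst) ▸ hd (s + 1)
    calc ∑ k ∈ Ico s t, (v (k + 1) - v k) * d (k + 1)
        = ∑ k ∈ Ico s t, (v (k + 1) - v k) * c := sum_congr rfl fun k hk => by rw [hin k hk]
      _ = (v t - v s) * c := by rw [← sum_mul, sum_Ico_sub v hst.le]
      _ ≤ 0 := mul_nonpos_of_nonpos_of_nonneg (sub_nonpos.2 (hv hst)) hc
  · rw [Ico_eq_empty_of_le hts, sum_empty]

end Generalities

section Lotteries

variable {m : ℕ} {lam mu : Lottery m}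

namespace Lottery

theorem prob_nonneg (lam : Lottery m) (U : Finset (Fin m)) : 0 ≤ lam.prob U :=
  sum_nonneg fun a _ => lam.2.1 a

theorem prob_mono (lam : Lottery m) {U V : Finset (Fin m)} (h : U ⊆ V) :
    lam.prob U ≤ lam.prob V :=
  sum_le_sum_of_subset_of_nonneg h fun a _ _ => lam.2.1 a

theorem prob_add_prob_compl (lam : Lottery m) (U : Finset (Fin m)) :
    lam.prob U + lam.prob Uᶜ = 1 := by
  rw [prob, prob, sum_add_sum_compl, lam.2.2]

theorem prob_congr {U : Finset (Fin m)} (h : ∀ z ∈ U, lam.1 z = mu.1 z) :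
    lam.prob U = mu.prob U :=
  sum_congr rfl h

theorem prob_eq_of_forall_notMem {U : Finset (Fin m)} (h : ∀ z, z ∉ U → lam.1 z = mu.1 z) :
    lam.prob U = mu.prob U := by
  have hcompl : lam.prob Uᶜ = mu.prob Uᶜ := prob_congr fun z hz => h z (mem_compl.1 hz)
  linarith [lam.prob_add_prob_compl U, mu.prob_add_prob_compl U]

theorem eq_of_forall_ne {y : Fin m} (h : ∀ z, z ≠ y → lam.1 z = mu.1 z) : lam = mu := by
  refine Subtype.ext (funext fun z => ?_)
  by_cases hz : z = y
  · have hy : lam.prob {y} = mu.prob {y} :=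
      prob_eq_of_forall_notMem fun z hz => h z (by simpa using hz)
    simpa [prob, hz] using hy
  · exact h z hz

/-- The decumulative distribution of a lottery: the probability of the alternatives of index at
least `k`. The bound `k` ranges over all natural numbers, the value being `0` for `m ≤ k`. -/
def tail (lam : Lottery m) (k : ℕ) : ℝ := lam.prob {z | k ≤ (z : ℕ)}

theorem prob_upSet (lam : Lottery m) (k : Fin m) : lam.prob (upSet k) = lam.tail k := rfl

@[simp] theorem tail_zero (lam : Lottery m) : lam.tail 0 = 1 := by
  simp [tail, prob, lam.2.2]

theorem tail_of_le (lam : Lottery m) {k : ℕ} (hk : m ≤ k) : lam.tail k = 0 := by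
  rw [tail, filter_false_of_mem fun z _ => by omega]
  rfl

theorem tail_eq_add (lam : Lottery m) (z : Fin m) : lam.tail z = lam.1 z + lam.tail (z + 1) := by
  have hset : univ.filter (fun w : Fin m => (z : ℕ) ≤ w)
      = insert z (univ.filter fun w : Fin m => (z : ℕ) + 1 ≤ w) := by
    ext w
    simp only [mem_insert, mem_filter_univ, Fin.ext_iff]
    omega
  rw [tail, hset, prob, sum_insert (by simp)]
  rfl

theorem tail_antitone (lam : Lottery m) : Antitone lam.tail := fun _ _ hjk =>
  lam.prob_mono (monotone_filter_right _ fun _ _ hk => hjk.trans hk)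

theorem prob_downSet (lam : Lottery m) (k : Fin m) :
    lam.prob (downSet k) = 1 - lam.tail (k + 1) := by
  have hset : (downSet k)ᶜ = ({z | (k : ℕ) + 1 ≤ z} : Finset (Fin m)) := by
    ext z
    simp only [downSet, mem_compl, mem_filter_univ, Fin.le_def]
    omega
  rw [eq_sub_iff_add_eq, tail, ← hset, prob_add_prob_compl]

theorem ext_tail (h : ∀ k < m, lam.tail k = mu.tail k) : lam = mu := by
  have hall (k) : lam.tail k = mu.tail k := by
    rcases lt_or_ge k m with hk | hk
    · exact h k hk
    · rw [tail_of_le _ hk, tail_of_le _ hk]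
  refine Subtype.ext (funext fun z => ?_)
  linarith [lam.tail_eq_add z, mu.tail_eq_add z, hall z, hall (z + 1)]

end Lottery

theorem degLottery_prob (a : Fin m) (U : Finset (Fin m)) :
    (degLottery a).prob U = if a ∈ U then 1 else 0 := by
  simp [Lottery.prob, degLottery]

theorem degLottery_tail (a : Fin m) (k : ℕ) :
    (degLottery a).tail k = if k ≤ (a : ℕ) then 1 else 0 := by
  simp [Lottery.tail, degLottery_prob]

theorem topSum_eq_prob (lam : Lottery m) (P : Pref m) (k : ℕ) :
    topSum lam P k = lam.prob {z | (P.symm z : ℕ) < k} :=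
  sum_equiv P (by simp) (by simp)

theorem topSum_succ (lam : Lottery m) (P : Pref m) (z : Fin m) :
    topSum lam P (P.symm z + 1) = topSum lam P (P.symm z) + lam.1 z := by
  have hset : univ.filter (fun w : Fin m => (P.symm w : ℕ) < P.symm z + 1)
      = insert z (univ.filter fun w : Fin m => (P.symm w : ℕ) < P.symm z) := by
    ext w
    rw [mem_insert, mem_filter_univ, mem_filter_univ, ← P.symm.injective.eq_iff, Fin.ext_iff]
    omega
  rw [topSum_eq_prob, topSum_eq_prob, hset, Lottery.prob, sum_insert (by simp), add_comm]
  rfl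

end Lotteries

section Swaps

variable {m n : ℕ} {P P' : Pref m} {a b x y z : Fin m} {D : Set (Pref m)}

theorem Prefers.ne (h : Prefers P a b) : a ≠ b := by
  rintro rfl
  exact lt_irrefl _ h

theorem Prefers.asymm (h : Prefers P a b) : ¬Prefers P b a := lt_asymm h

theorem prefers_or_prefers (P : Pref m) (h : a ≠ b) : Prefers P a b ∨ Prefers P b a :=
  lt_or_gt_of_ne (P.symm.injective.ne h)

theorem prefers_top [NeZero m] (h : b ≠ P 0) : Prefers P (P 0) b := by
  rw [Prefers, P.symm_apply_apply, Fin.pos_iff_ne_zero]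
  exact fun h0 => h (P.symm_apply_eq.1 h0)

theorem Prefers.ne_top [NeZero m] (h : Prefers P a b) : b ≠ P 0 := by
  rintro rfl
  rw [Prefers, P.symm_apply_apply] at h
  exact Fin.not_lt_zero _ h

/-- `P'` arises from `P` by exchanging `x` with the alternative `y` ranked immediately below it.
This is the adjacency of preferences with the exchanged pair made explicit. -/
structure IsSwap (P P' : Pref m) (x y : Fin m) : Prop where
  rank_succ : (P.symm y : ℕ) = P.symm x + 1
  eq_trans : P' = P.trans (Equiv.swap x y)

theorem Adjacent.exists_isSwap (h : Adjacent P P') : ∃ x y, IsSwap P P' x y := by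
  obtain ⟨-, k, hk, hfst, hsnd, hrest⟩ := h
  refine ⟨P ⟨k, by omega⟩, P ⟨k + 1, hk⟩, by simp, Equiv.ext fun l => ?_⟩
  rw [Equiv.trans_apply]
  by_cases hl : (l : ℕ) = k
  · rw [show l = ⟨k, by omega⟩ from Fin.ext hl, Equiv.swap_apply_left, hsnd]
  by_cases hl' : (l : ℕ) = k + 1
  · rw [show l = ⟨k + 1, hk⟩ from Fin.ext hl', Equiv.swap_apply_right, hfst]
  · rw [Equiv.swap_apply_of_ne_of_ne (P.injective.ne fun h => hl (congrArg Fin.val h))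
      (P.injective.ne fun h => hl' (congrArg Fin.val h)), hrest l hl hl']

namespace IsSwap

theorem rank (h : IsSwap P P' x y) (z : Fin m) : P'.symm z = P.symm (Equiv.swap x y z) := by
  rw [h.eq_trans, Equiv.symm_trans_apply, Equiv.symm_swap]

theorem symm (h : IsSwap P P' x y) : IsSwap P' P y x where
  rank_succ := by rw [h.rank, h.rank, Equiv.swap_apply_left, Equiv.swap_apply_right, h.rank_succ]
  eq_trans := by ext l; simp [h.eq_trans, Equiv.swap_comm y x]

theorem prefers (h : IsSwap P P' x y) : Prefers P x y :=
  Fin.lt_def.2 (by have := h.rank_succ; omega)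

theorem top_eq_or [NeZero m] (h : IsSwap P P' x y) : P 0 = P' 0 ∨ (P 0 = x ∧ P' 0 = y) := by
  have hy : P 0 ≠ y := h.prefers.ne_top.symm
  by_cases hx : P 0 = x
  · exact Or.inr ⟨hx, by rw [h.eq_trans, Equiv.trans_apply, hx, Equiv.swap_apply_left]⟩
  · exact Or.inl (by rw [h.eq_trans, Equiv.trans_apply, Equiv.swap_apply_of_ne_of_ne hx hy])

theorem ne_or_ne_of_prefers (h : IsSwap P P' x y) (hP : Prefers P a b) (hP' : Prefers P' a b) :
    (a ≠ x ∧ a ≠ y) ∨ (b ≠ x ∧ b ≠ y) := by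
  have hab := hP.ne
  have hxy : ¬(a = x ∧ b = y) := by
    rintro ⟨rfl, rfl⟩
    exact hP'.asymm h.symm.prefers
  have hyx : ¬(a = y ∧ b = x) := by
    rintro ⟨rfl, rfl⟩
    exact hP.asymm h.prefers
  grind

theorem topSum_eq (h : IsSwap P P' x y) (lam : Lottery m) {k : ℕ} (hk : k ≠ P.symm x + 1) :
    topSum lam P' k = topSum lam P k := by
  have hrank := h.rank_succ
  rw [topSum_eq_prob, topSum_eq_prob]
  congr 1
  refine filter_congr fun z _ => ?_
  rw [h.rank]
  rcases eq_or_ne z x with rfl | hx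
  · rw [Equiv.swap_apply_left]
    omega
  rcases eq_or_ne z y with rfl | hy
  · rw [Equiv.swap_apply_right]
    omega
  · rw [Equiv.swap_apply_of_ne_of_ne hx hy]

end IsSwap

namespace StrategyProof

variable {φ : Profile D n → Lottery m} {A B : D}

theorem topSum_update_le (hsp : StrategyProof φ) (X : Profile D n) (i : Fin n) (A B : D) {k : ℕ}
    (hk : k ≤ m) :
    topSum (φ (Function.update X i B)) A.1 k ≤ topSum (φ (Function.update X i A)) A.1 k := by
  simpa using hsp i (Function.update X i A) B k hk

theorem topSum_update_eq (hsp : StrategyProof φ) (h : IsSwap A.1 B.1 x y) (X : Profile D n)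
    (i : Fin n) {k : ℕ} (hk : k ≤ m) (hkx : k ≠ A.1.symm x + 1) :
    topSum (φ (Function.update X i A)) A.1 k = topSum (φ (Function.update X i B)) A.1 k := by
  refine le_antisymm ?_ (hsp.topSum_update_le X i A B hk)
  rw [← h.topSum_eq _ hkx, ← h.topSum_eq _ hkx]
  exact hsp.topSum_update_le X i B A hk

theorem apply_eq_of_isSwap (hsp : StrategyProof φ) (h : IsSwap A.1 B.1 x y) (X : Profile D n)
    (i : Fin n) (hx : z ≠ x) (hy : z ≠ y) :
    (φ (Function.update X i A)).1 z = (φ (Function.update X i B)).1 z := by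
  have hzx : (A.1.symm z : ℕ) ≠ A.1.symm x := Fin.val_ne_of_ne (A.1.symm.injective.ne hx)
  have hzy : (A.1.symm z : ℕ) ≠ A.1.symm y := Fin.val_ne_of_ne (A.1.symm.injective.ne hy)
  have below := hsp.topSum_update_eq h X i (A.1.symm z).2.le (by rwa [← h.rank_succ])
  have upto := hsp.topSum_update_eq h X i (A.1.symm z).2 (by omega)
  rw [topSum_succ, topSum_succ] at upto
  linarith

theorem apply_le_of_isSwap (hsp : StrategyProof φ) (h : IsSwap A.1 B.1 x y) (X : Profile D n)
    (i : Fin n) : (φ (Function.update X i A)).1 y ≤ (φ (Function.update X i B)).1 y := by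
  have below := hsp.topSum_update_eq h.symm X i (B.1.symm y).2.le (by omega)
  have upto := hsp.topSum_update_le X i B A (B.1.symm y).2
  rw [topSum_succ, topSum_succ] at upto
  linarith

end StrategyProof

end Swaps

section TopsOnly

variable {m n : ℕ} {a b x y z : Fin m} {D : Set (Pref m)}

theorem NoRestoration.prefers {π : ℕ → Pref m} {v t : ℕ} (h : NoRestoration π v a b)
    (hfst : Prefers (π 0) a b) (hlast : Prefers (π (v - 1)) a b) (ht : t < v) :
    Prefers (π t) a b := by
  refine (prefers_or_prefers (π t) hfst.ne).resolve_right fun hba => ?_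
  have ht0 : t ≠ 0 := by
    rintro rfl
    exact hfst.asymm hba
  have htv : t ≠ v - 1 := by
    rintro rfl
    exact hlast.asymm hba
  exact (h 0 t (v - 1) (by omega) (by omega) (by omega)).1 ⟨hfst, hba, hlast⟩

theorem IsPath.eq_of_forall_succ {β : Type*} {A B : D} {π : ℕ → Pref m} {v : ℕ}
    (hπ : IsPath D A.1 B.1 π v) {g : D → β}
    (hg : ∀ (E F : D) (t : ℕ), t + 1 < v → E.1 = π t → F.1 = π (t + 1) → g E = g F) :
    g A = g B := by
  obtain ⟨hv, hD, -, hfst, hlast, -⟩ := hπ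
  have hconst : ∀ t (ht : t < v), g A = g ⟨π t, hD t ht⟩ := by
    intro t
    induction t with
    | zero => exact fun ht => congrArg g (Subtype.ext hfst.symm)
    | succ t ih => exact fun ht => (ih (by omega)).trans (hg _ _ t ht rfl rfl)
  exact (hconst (v - 1) (by omega)).trans (congrArg g (Subtype.ext hlast))

theorem NoRestorationDomain.eq_of_forall_isSwap {β : Type*} (hnr : NoRestorationDomain D)
    {g : D → β}
    (hg : ∀ (E F : D) x y, IsSwap E.1 F.1 x y → Prefers E.1 a b → Prefers F.1 a b → g E = g F)
    {A B : D} (hA : Prefers A.1 a b) (hB : Prefers B.1 a b) : g A = g B := by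
  by_cases hAB : A.1 = B.1
  · rw [Subtype.ext hAB]
  obtain ⟨π, v, hπ, hrest⟩ := hnr A.1 A.2 B.1 B.2 hAB a b
  have ⟨_, _, _, hfst, hlast, hadj⟩ := hπ
  have hab : ∀ t < v, Prefers (π t) a b := fun t ht =>
    hrest.prefers (hfst ▸ hA) (hlast ▸ hB) ht
  refine hπ.eq_of_forall_succ fun E F t ht hE hF => ?_
  obtain ⟨x, y, hswap⟩ := (hadj t ht).exists_isSwap
  exact hg E F x y (by rwa [hE, hF]) (hE ▸ hab t (by omega)) (hF ▸ hab (t + 1) ht)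

/-- The change in the probability of `z` when voter `i` reports `A` instead of `B`, as a function
of the profile of the other voters (the entry of `X` at `i` is irrelevant). -/
def reportEffect (φ : Profile D n → Lottery m) (i : Fin n) (A B : D) (z : Fin m)
    (X : Profile D n) : ℝ :=
  (φ (Function.update X i A)).1 z - (φ (Function.update X i B)).1 z

variable {φ : Profile D n → Lottery m} {A B : D}

theorem reportEffect_update_eq (hsp : StrategyProof φ) {E F : D} (h : IsSwap E.1 F.1 x y)
    (hx : z ≠ x) (hy : z ≠ y) (i j : Fin n) (X : Profile D n) :
    reportEffect φ i A B z (Function.update X j E)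
      = reportEffect φ i A B z (Function.update X j F) := by
  rcases eq_or_ne j i with rfl | hji
  · simp only [reportEffect, Function.update_idem]
  · simp only [reportEffect, Function.update_comm hji]
    rw [hsp.apply_eq_of_isSwap h _ j hx hy, hsp.apply_eq_of_isSwap h _ j hx hy]

theorem reportEffect_add_eq_zero (hsp : StrategyProof φ) (h : IsSwap A.1 B.1 x y) (i : Fin n)
    (X : Profile D n) : reportEffect φ i A B x X + reportEffect φ i A B y X = 0 := by
  have hpair : (φ (Function.update X i A)).prob {x, y} = (φ (Function.update X i B)).prob {x, y} :=
    Lottery.prob_eq_of_forall_notMem fun z hz => by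
      rw [mem_insert, mem_singleton, not_or] at hz
      exact hsp.apply_eq_of_isSwap h X i hz.1 hz.2
  rw [Lottery.prob, Lottery.prob, sum_pair h.prefers.ne, sum_pair h.prefers.ne] at hpair
  unfold reportEffect
  linarith

/-- A swap of `E` that keeps the order of `x` and `y` avoids `x` or avoids `y`, and the effects on
`x` and on `y` are opposite. -/
theorem reportEffect_congr (hnr : NoRestorationDomain D) (hsp : StrategyProof φ)
    (h : IsSwap A.1 B.1 x y) (i : Fin n) {X Y : Profile D n}
    (hXY : ∀ j, Prefers (X j).1 x y ↔ Prefers (Y j).1 x y) :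
    reportEffect φ i A B x X = reportEffect φ i A B x Y := by
  have hopp (Z) : reportEffect φ i A B x Z = -reportEffect φ i A B y Z :=
    eq_neg_of_add_eq_zero_left (reportEffect_add_eq_zero hsp h i Z)
  have hstep (Z : Profile D n) (j : Fin n) (E F : D) {c d : Fin m} (hEF : IsSwap E.1 F.1 c d)
      (hor : (x ≠ c ∧ x ≠ d) ∨ (y ≠ c ∧ y ≠ d)) :
      reportEffect φ i A B x (Function.update Z j E)
        = reportEffect φ i A B x (Function.update Z j F) := by
    rcases hor with ⟨hc, hd⟩ | ⟨hc, hd⟩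
    · exact reportEffect_update_eq hsp hEF hc hd i j Z
    · rw [hopp, hopp, reportEffect_update_eq hsp hEF hc hd i j Z]
  refine eq_of_forall_update_eq (F := reportEffect φ i A B x)
    (r := fun E F => Prefers E.1 x y ↔ Prefers F.1 x y) (fun Z j E F hEF => ?_) hXY
  by_cases hE : Prefers E.1 x y
  · exact hnr.eq_of_forall_isSwap (g := fun E => reportEffect φ i A B x (Function.update Z j E))
      (fun E F c d hs hE hF => hstep Z j E F hs (hs.ne_or_ne_of_prefers hE hF)) hE (hEF.1 hE)
  · have hne := h.prefers.ne
    exact hnr.eq_of_forall_isSwap (g := fun E => reportEffect φ i A B x (Function.update Z j E))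
      (fun E F c d hs hE hF => hstep Z j E F hs (hs.ne_or_ne_of_prefers hE hF).symm)
      ((prefers_or_prefers _ hne).resolve_left hE)
      ((prefers_or_prefers _ hne).resolve_left fun hF => hE (hEF.2 hF))

variable [NeZero m]

/-- Replacing every other voter by `A` or `B`, according to their view of `x` and `y`, does not
change the effect of the swap, and makes the profile unanimous. -/
theorem apply_update_eq_of_isSwap (hnr : NoRestorationDomain D) (hu : Unanimous φ)
    (hsp : StrategyProof φ) (h : IsSwap A.1 B.1 x y) (htop : topOf A = topOf B) (i : Fin n)
    (X : Profile D n) : φ (Function.update X i A) = φ (Function.update X i B) := by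
  classical
  let Y : Profile D n := fun j => if Prefers (X j).1 x y then A else B
  have hunanimous (C : D) (hC : topOf C = topOf A) :
      φ (Function.update Y i C) = degLottery (topOf A) := by
    refine hu _ _ fun j => ?_
    rcases eq_or_ne j i with rfl | hj
    · rwa [Function.update_self]
    · simp only [Y, Function.update_of_ne hj]
      split_ifs
      exacts [rfl, htop.symm]
  have hXY : reportEffect φ i A B x X = reportEffect φ i A B x Y := by
    refine reportEffect_congr hnr hsp h i fun j => ?_
    by_cases hj : Prefers (X j).1 x y
    · simp [Y, hj, h.prefers]
    · simp [Y, hj, h.symm.prefers.asymm]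
  have hzero : reportEffect φ i A B x X = 0 := by
    rw [hXY, reportEffect, hunanimous A rfl, hunanimous B htop.symm, sub_self]
  refine Lottery.eq_of_forall_ne (y := y) fun z hzy => ?_
  rcases eq_or_ne z x with rfl | hzx
  · exact sub_eq_zero.1 hzero
  · exact hsp.apply_eq_of_isSwap h X i hzx hzy

theorem apply_update_eq_of_topOf_eq (hnr : NoRestorationDomain D) (hu : Unanimous φ)
    (hsp : StrategyProof φ) (htop : topOf A = topOf B) (i : Fin n) (X : Profile D n) :
    φ (Function.update X i A) = φ (Function.update X i B) := by
  refine Lottery.eq_of_forall_ne (y := topOf A) fun b hb => ?_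
  refine hnr.eq_of_forall_isSwap (a := topOf A) (b := b)
    (g := fun E => (φ (Function.update X i E)).1 b) (fun E F x y hswap hE hF => ?_)
    (prefers_top hb) ?_
  · rcases hswap.top_eq_or with heq | ⟨rfl, rfl⟩
    · exact congrArg (fun lam => lam.1 b) (apply_update_eq_of_isSwap hnr hu hsp hswap heq i X)
    · exact hsp.apply_eq_of_isSwap hswap X i hE.ne_top hF.ne_top
  · rw [htop] at hb ⊢
    exact prefers_top hb

theorem topsOnly_of_unanimous_of_strategyProof (hnr : NoRestorationDomain D) (hu : Unanimous φ)
    (hsp : StrategyProof φ) : TopsOnly φ := fun _ _ htop =>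
  eq_of_forall_update_eq (r := fun A B => topOf A = topOf B)
    (fun X i _ _ hAB => apply_update_eq_of_topOf_eq hnr hu hsp hAB i X) htop

end TopsOnly

section HybridPreferences

variable {m : ℕ} [NeZero m] {P P' : Pref m} {p q a b c : Fin m}

namespace IsHybridPref

theorem prefers_of_lt (h : IsHybridPref p q P) (ha : P 0 ≤ a) (hab : a < b)
    (hside : b ≤ p ∨ q ≤ a) : Prefers P a b := by
  rcases ha.eq_or_lt with rfl | ha
  · exact prefers_top hab.ne'
  · exact h.1 b a (hside.imp (fun hb => ⟨hb, hab.le.trans hb⟩) fun hq => ⟨hq.trans hab.le, hq⟩)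
      (Or.inr ⟨ha, hab⟩)

theorem prefers_of_gt (h : IsHybridPref p q P) (ha : a ≤ P 0) (hab : b < a)
    (hside : a ≤ p ∨ q ≤ b) : Prefers P a b := by
  rcases ha.eq_or_lt with rfl | ha
  · exact prefers_top hab.ne
  · exact h.1 b a (hside.imp (fun hp => ⟨hab.le.trans hp, hp⟩) fun hb => ⟨hb, hb.trans hab.le⟩)
      (Or.inl ⟨hab, ha⟩)

theorem prefers_max (h : IsHybridPref p q P) (hb : max (P 0) p < b) (hbq : b ≤ q) :
    Prefers P (max (P 0) p) b := by
  rcases le_or_gt (P 0) p with hp | hp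
  · rw [max_eq_right hp] at hb ⊢
    exact h.2.1 hp b hb.le hbq hb.ne'
  · rw [max_eq_left hp.le] at hb ⊢
    exact prefers_top hb.ne'

theorem prefers_min (h : IsHybridPref p q P) (hpb : p ≤ b) (hb : b < min (P 0) q) :
    Prefers P (min (P 0) q) b := by
  rcases le_or_gt q (P 0) with hq | hq
  · rw [min_eq_right hq] at hb ⊢
    exact h.2.2 hq b hpb hb.le hb.ne
  · rw [min_eq_left hq.le] at hb ⊢
    exact prefers_top hb.ne

end IsHybridPref

theorem IsSwap.not_prefers (h : IsSwap P P' (P 0) b) (hc : c ≠ P 0) : ¬Prefers P c b := by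
  intro hcb
  have htop : Prefers P (P 0) c := prefers_top hc
  have := h.rank_succ
  rw [Prefers, Fin.lt_def] at hcb htop
  omega

/-- If the edge is too long, some alternative strictly between `P 0` and `b` is better than `b`. -/
theorem IsHybridPref.eq_succ_or_of_isSwap (h : IsHybridPref p q P) (hswap : IsSwap P P' (P 0) b)
    (hlt : P 0 < b) : (b : ℕ) = P 0 + 1 ∨ (p ≤ P 0 ∧ b ≤ q) := by
  by_contra! hlong
  obtain ⟨c, hc, hcb⟩ : ∃ c, P 0 < c ∧ Prefers P c b := by
    by_cases hout : b ≤ p ∨ q ≤ P 0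
    · refine ⟨⟨P 0 + 1, by omega⟩, Fin.lt_def.2 (Nat.lt_succ_self _), ?_⟩
      exact h.prefers_of_lt (Fin.le_def.2 (Nat.le_succ _)) (show (P 0 : ℕ) + 1 < b by omega)
        (hout.imp_right fun hq => hq.trans (Fin.le_def.2 (Nat.le_succ _)))
    · push Not at hout
      rcases lt_or_ge q b with hqb | hbq
      · exact ⟨q, hout.2, h.prefers_of_lt hout.2.le hqb (Or.inr le_rfl)⟩
      · have hp : P 0 < p := lt_of_not_ge fun hp => (hlong.2 hp).not_ge hbq
        exact ⟨p, hp, by simpa [hp.le] using h.prefers_max (max_lt hlt hout.1) hbq⟩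
  exact hswap.not_prefers hc.ne' hcb

end HybridPreferences

section StrongGraph

variable {m : ℕ} [NeZero m] {D : Set (Pref m)} {p q a b : Fin m}

theorem le_lastAlt (a : Fin m) : a ≤ lastAlt m := Nat.le_sub_one_of_lt a.2

theorem StronglyConnected.symm (h : StronglyConnected D a b) : StronglyConnected D b a := by
  obtain ⟨hne, P, hP, P', hP', h0, h1, h0', h1', hrest⟩ := h
  exact ⟨hne.symm, P', hP', P, hP, h0', h1', h0, h1, fun k hk => (hrest k hk).symm⟩

/-- The graph of strong connectedness on all alternatives, `G_≈^A(D)` in the paper. -/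
def strongGraph (D : Set (Pref m)) : SimpleGraph (Fin m) where
  Adj := StronglyConnected D
  symm := ⟨fun _ _ h => h.symm⟩
  loopless := ⟨fun _ h => h.1 rfl⟩

theorem exists_isSwap_of_adj (h : (strongGraph D).Adj a b) :
    ∃ A B : D, topOf A = a ∧ topOf B = b ∧ IsSwap A.1 B.1 a b := by
  obtain ⟨hne, P, hP, P', hP', rfl, rfl, hb, ha, hrest⟩ := h
  have hone : ((1 : Fin m) : ℕ) = 1 := by
    have hm : m ≠ 1 := by
      rintro rfl
      exact hne (congrArg P (Subsingleton.elim _ _))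
    rw [Fin.val_one', Nat.mod_eq_of_lt (by have := NeZero.pos m; omega)]
  refine ⟨⟨P, hP⟩, ⟨P', hP'⟩, rfl, hb, ?_, Equiv.ext fun k => ?_⟩
  · rw [P.symm_apply_apply, P.symm_apply_apply, hone, Fin.val_zero]
  rw [Equiv.trans_apply]
  rcases eq_or_ne k 0 with rfl | h0
  · rw [Equiv.swap_apply_left, hb]
  rcases eq_or_ne k 1 with rfl | h1
  · rw [Equiv.swap_apply_right, ha]
  have hk0 := Fin.val_ne_of_ne h0
  have hk1 := Fin.val_ne_of_ne h1
  rw [Fin.val_zero] at hk0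
  rw [Equiv.swap_apply_of_ne_of_ne (P.injective.ne h0) (P.injective.ne h1), hrest k (by omega)]

theorem reachable_deleteIncidenceSet {V : Type*} {G : SimpleGraph V} {a b z : V} (w : G.Walk a b)
    (hz : z ∉ w.support) : (G.deleteIncidenceSet z).Reachable a b := by
  induction w with
  | nil => rfl
  | cons hadj w ih =>
    rw [SimpleGraph.Walk.support_cons, List.mem_cons, not_or] at hz
    have hadj' := SimpleGraph.deleteIncidenceSet_adj.2
      ⟨hadj, Ne.symm hz.1, fun h => hz.2 (h ▸ w.start_mem_support)⟩
    exact hadj'.reachable.trans (ih hz.2)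

theorem reachable_or_reachable_of_mem_support {V : Type*} {G : SimpleGraph V}
    {s t y z : V} {w : G.Walk s t} (hw : w.support.Nodup) (hy : y ∈ w.support) (hyz : y ≠ z) :
    (G.deleteIncidenceSet z).Reachable y s ∨ (G.deleteIncidenceSet z).Reachable y t := by
  classical
  by_cases hz : z ∈ (w.takeUntil y hy).support
  · refine Or.inr (reachable_deleteIncidenceSet (w.dropUntil y hy) fun hz' => ?_)
    rw [← w.take_spec hy, SimpleGraph.Walk.support_append] at hw
    rw [SimpleGraph.Walk.mem_support_iff] at hz'
    exact List.disjoint_of_nodup_append hw hz (hz'.resolve_left hyz.symm)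
  · exact Or.inl (reachable_deleteIncidenceSet _ hz).symm

theorem VertexPathBetween.exists_walk {B : Set (Fin m)} {l : List (Fin m)}
    (h : VertexPathBetween D B a b l) : ∃ w : (strongGraph D).Walk a b, w.support = l := by
  obtain ⟨⟨hne, -, -, hchain⟩, hhead, hlast⟩ := h
  have ha : l.head hne = a := by simpa [List.head?_eq_some_head hne] using hhead
  have hb : l.getLast hne = b := by simpa [List.getLast?_eq_some_getLast hne] using hlast
  have hadj : l.IsChain (strongGraph D).Adj := hchain
  exact ⟨(SimpleGraph.Walk.ofSupport l hne hadj).copy ha hb, by simp⟩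

/-- The combinatorial properties of the graph of strong connectedness of a `(p, q)`-hybrid*
domain that determine its unanimous and strategy-proof rules. -/
structure IsHybridGraph (G : SimpleGraph (Fin m)) (p q : Fin m) : Prop where
  preconnected : G.Preconnected
  edge : ∀ a b, G.Adj a b → a < b → (b : ℕ) = a + 1 ∨ (p ≤ a ∧ b ≤ q)
  reachable_end : ∀ y z, y ≠ z →
    (G.deleteIncidenceSet z).Reachable y 0 ∨ (G.deleteIncidenceSet z).Reachable y (lastAlt m)
  exists_adj_ne : (p : ℕ) + 1 < q → ∀ a ∈ Set.Icc p q, ∀ b ∈ Set.Icc p q, G.Adj a b →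
    ∃ c ∈ Set.Icc p q, c ≠ b ∧ G.Adj a c

theorem IsHybridStar.isHybridGraph (hm : 3 ≤ m) (h : IsHybridStar D p q) :
    IsHybridGraph (strongGraph D) p q := by
  obtain ⟨hsub, hpath, hleaf⟩ := h
  have hends (y z : Fin m) (hyz : y ≠ z) :
      ((strongGraph D).deleteIncidenceSet z).Reachable y 0 ∨
        ((strongGraph D).deleteIncidenceSet z).Reachable y (lastAlt m) := by
    rcases eq_or_ne y 0 with rfl | h0
    · exact Or.inl (SimpleGraph.Reachable.refl _)
    rcases eq_or_ne y (lastAlt m) with rfl | h1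
    · exact Or.inr (SimpleGraph.Reachable.refl _)
    obtain ⟨l, hl, hy⟩ := hpath y h0 h1
    obtain ⟨w, rfl⟩ := hl.exists_walk
    exact reachable_or_reachable_of_mem_support hl.1.2.1 hy hyz
  refine ⟨?_, ?_, hends, ?_⟩
  · obtain ⟨l, hl, -⟩ := hpath ⟨1, by omega⟩ (by simp [Fin.ext_iff])
      (by simp only [ne_eq, Fin.ext_iff, lastAlt]; omega)
    obtain ⟨w, -⟩ := hl.exists_walk
    have : Nontrivial (Fin m) := Fin.nontrivial_iff_two_le.2 (by omega)
    have hzero (y : Fin m) : (strongGraph D).Reachable y 0 := by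
      obtain ⟨z, hz⟩ := exists_ne y
      have hle := (strongGraph D).deleteIncidenceSet_le z
      exact (hends y z hz.symm).elim (·.mono hle) fun hy => (hy.mono hle).trans w.reachable.symm
    exact fun a b => (hzero a).trans (hzero b).symm
  · intro a b hab hlt
    obtain ⟨A, B, rfl, -, hswap⟩ := exists_isSwap_of_adj hab
    exact IsHybridPref.eq_succ_or_of_isSwap (hsub A.2) hswap hlt
  · intro hgap a ha b hb hab
    by_contra! hunique
    exact hleaf hgap a ⟨ha, b, ⟨hb, hab⟩, fun c hc => by_contra fun hcb => hunique c hc.1 hcb hc.2⟩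

end StrongGraph

section EdgeRules

variable {m : ℕ} {ι : Type*} [DecidableEq ι] {G : SimpleGraph (Fin m)}
  {Φ : (ι → Fin m) → Lottery m} {U : Finset (Fin m)} {a b h u w z : Fin m} {x y : ι → Fin m}

/-- The local form of unanimity and strategy-proofness for a rule that reads only the top-ranked
alternatives: when a voter moves along an edge of `G`, only the probabilities of the two endpoints
change, and the endpoint moved to does not lose. -/
structure IsEdgeRule (G : SimpleGraph (Fin m)) (Φ : (ι → Fin m) → Lottery m) : Prop where
  unanimous : ∀ a, Φ (fun _ => a) = degLottery a
  apply_eq : ∀ x i a b, G.Adj a b → ∀ z, z ≠ a → z ≠ b →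
    (Φ (Function.update x i a)).1 z = (Φ (Function.update x i b)).1 z
  apply_le : ∀ x i a b, G.Adj a b →
    (Φ (Function.update x i a)).1 b ≤ (Φ (Function.update x i b)).1 b

namespace IsEdgeRule

theorem prob_unanimous (hΦ : IsEdgeRule G Φ) (a : Fin m) (U : Finset (Fin m)) :
    (Φ fun _ => a).prob U = if a ∈ U then 1 else 0 := by
  rw [hΦ.unanimous, degLottery_prob]

theorem prob_eq_of_adj (hΦ : IsEdgeRule G Φ) (x : ι → Fin m) (i : ι) (hab : G.Adj a b)
    (hU : a ∈ U ↔ b ∈ U) :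
    (Φ (Function.update x i a)).prob U = (Φ (Function.update x i b)).prob U := by
  by_cases ha : a ∈ U
  · refine Lottery.prob_eq_of_forall_notMem fun z hz => ?_
    exact hΦ.apply_eq x i a b hab z (fun h => hz (h ▸ ha)) fun h => hz (h ▸ hU.1 ha)
  · refine Lottery.prob_congr fun z hz => ?_
    exact hΦ.apply_eq x i a b hab z (fun h => ha (h ▸ hz)) fun h => ha (hU.2 (h ▸ hz))

theorem prob_le_of_adj (hΦ : IsEdgeRule G Φ) (x : ι → Fin m) (i : ι) (hab : G.Adj a b)
    (ha : a ∉ U) : (Φ (Function.update x i a)).prob U ≤ (Φ (Function.update x i b)).prob U := by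
  refine sum_le_sum fun z hz => ?_
  rcases eq_or_ne z b with rfl | hzb
  · exact hΦ.apply_le x i a z hab
  · exact (hΦ.apply_eq x i a b hab z (fun h => ha (h ▸ hz)) hzb).le

variable [Finite ι]

theorem apply_eq_of_reachable (hΦ : IsEdgeRule G Φ)
    (hxy : ∀ i, (G.deleteIncidenceSet z).Reachable (x i) (y i)) : (Φ x).1 z = (Φ y).1 z := by
  refine eq_of_forall_update_eq (F := fun x => (Φ x).1 z) (fun x i a b hab => ?_) hxy
  refine eq_of_reachable (f := fun a => (Φ (Function.update x i a)).1 z) (fun c d hcd => ?_) hab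
  obtain ⟨hcd, hc, hd⟩ := SimpleGraph.deleteIncidenceSet_adj.1 hcd
  exact hΦ.apply_eq x i c d hcd z hc.symm hd.symm

end IsEdgeRule

/-- `U` is attached to its complement through the single vertex `h` of `U`, and its complement
stays connected without `h`. -/
structure IsPendant (G : SimpleGraph (Fin m)) (U : Finset (Fin m)) (h : Fin m) : Prop where
  mem : h ∈ U
  eq_of_adj : ∀ a ∈ U, ∀ b ∉ U, G.Adj a b → a = h
  reachable : ∀ a ∉ U, ∀ b ∉ U, (G.deleteIncidenceSet h).Reachable a b

namespace IsEdgeRule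

variable [Finite ι]

/-- A report inside `U` is moved to `h` and a report outside `U` is moved around `h`; neither move
crosses the boundary of `U`. -/
theorem prob_eq_of_isPendant (hΦ : IsEdgeRule G Φ) (hG : G.Preconnected) (hU : IsPendant G U h)
    (hxy : ∀ i, x i ∈ U ↔ y i ∈ U) : (Φ x).prob U = (Φ y).prob U := by
  refine eq_of_forall_update_eq (F := fun x => (Φ x).prob U)
    (r := fun a b => a ∈ U ↔ b ∈ U) (fun x i a b hab => ?_) hxy
  let f a := (Φ (Function.update x i a)).prob U
  by_cases ha : a ∈ U
  · have hconst := eq_of_reachable (f := fun a => if a ∈ U then f a else f h)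
      (fun c d hcd => ?_) (hG a b)
    · simpa only [ha, hab.1 ha, if_true] using hconst
    · by_cases hc : c ∈ U <;> by_cases hd : d ∈ U <;> simp only [hc, hd, if_true, if_false]
      · exact hΦ.prob_eq_of_adj x i hcd (iff_of_true hc hd)
      · rw [hU.eq_of_adj c hc d hd hcd]
      · rw [hU.eq_of_adj d hd c hc hcd.symm]
  · refine eq_of_reachable (f := f) (fun c d hcd => ?_) (hU.reachable a ha b (mt hab.2 ha))
    obtain ⟨hcd, hc, hd⟩ := SimpleGraph.deleteIncidenceSet_adj.1 hcd
    refine hΦ.prob_eq_of_adj x i hcd ⟨fun hcU => ?_, fun hdU => ?_⟩ <;> by_contra hout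
    · exact hc (hU.eq_of_adj c hcU d hout hcd)
    · exact hd (hU.eq_of_adj d hdU c hout hcd.symm)

theorem apply_eq_of_adj (hΦ : IsEdgeRule G Φ) (hab : G.Adj a b) (ha : z ≠ a) (hb : z ≠ b)
    (hxy : ∀ i, x i = y i ∨ (x i = a ∧ y i = b) ∨ (x i = b ∧ y i = a)) :
    (Φ x).1 z = (Φ y).1 z := by
  have hab' : (G.deleteIncidenceSet z).Adj a b :=
    SimpleGraph.deleteIncidenceSet_adj.2 ⟨hab, ha.symm, hb.symm⟩
  refine hΦ.apply_eq_of_reachable fun i => ?_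
  rcases hxy i with h | ⟨hx, hy⟩ | ⟨hx, hy⟩
  · rw [h]
  · rw [hx, hy]
    exact hab'.reachable
  · rw [hx, hy]
    exact hab'.symm.reachable

theorem prob_add_apply_add_apply (hΦ : IsEdgeRule G Φ) (hh : h ∈ U) (hu : u ∉ U) (hw : w ∉ U)
    (huw : u ≠ w) (hhu : G.Adj h u) (hhw : G.Adj h w) (hx : ∀ i, x i = h ∨ x i = u ∨ x i = w) :
    (Φ x).prob U + (Φ x).1 u + (Φ x).1 w = 1 := by
  have hrest :
      (Φ x).prob (insert u (insert w U)) = (Φ fun _ => h).prob (insert u (insert w U)) := by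
    refine Lottery.prob_eq_of_forall_notMem fun z hz => ?_
    simp only [mem_insert, not_or] at hz
    have hzh : z ≠ h := fun h => hz.2.2 (h ▸ hh)
    refine hΦ.apply_eq_of_reachable fun i => ?_
    rcases hx i with h' | h' | h' <;> rw [h']
    · exact (SimpleGraph.deleteIncidenceSet_adj.2 ⟨hhu.symm, Ne.symm hz.1, hzh.symm⟩).reachable
    · exact (SimpleGraph.deleteIncidenceSet_adj.2 ⟨hhw.symm, Ne.symm hz.2.1, hzh.symm⟩).reachable
  rw [hΦ.prob_unanimous, if_pos (by simp [hh]), Lottery.prob, sum_insert (by simp [huw, hu]),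
    sum_insert hw] at hrest
  unfold Lottery.prob
  linarith

end IsEdgeRule

/-- On profiles over `h`, `u` and `w`, the probabilities of `U`, `u` and `w` add up to one, and
each depends only on the voters at the corresponding vertex; such a partition of one is additive. -/
theorem IsEdgeRule.exists_weights_of_isPendant [Fintype ι] (hΦ : IsEdgeRule G Φ)
    (hG : G.Preconnected) (hU : IsPendant G U h) (hu : u ∉ U) (hw : w ∉ U) (huw : u ≠ w)
    (hhu : G.Adj h u) (hhw : G.Adj h w) :
    ∃ ε : ι → ℝ, (∀ i, 0 ≤ ε i) ∧ ∑ i, ε i = 1 ∧ ∀ x, (Φ x).prob U = ∑ i with x i ∈ U, ε i := by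
  have hh := hU.mem
  let A (S : Finset ι) : ℝ := (Φ (S.piecewise (fun _ => h) fun _ => u)).prob U
  have hA (x : ι → Fin m) {S : Finset ι} (hS : ∀ i, i ∈ S ↔ x i ∈ U) : (Φ x).prob U = A S := by
    refine hΦ.prob_eq_of_isPendant hG hU fun i => ?_
    by_cases hi : i ∈ S <;> simp [hi, ← hS, hh, hu]
  have hadd (S) : A S = ∑ i ∈ S, A {i} := by
    refine eq_sum_of_add_add_eq (A := A) (c := 1)
      (B := fun S => (Φ (S.piecewise (fun _ => u) fun _ => h)).1 u)
      (C := fun S => (Φ (S.piecewise (fun _ => w) fun _ => h)).1 w) ?_ ?_ (fun R T hRT => ?_) S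
    · simp [A, hΦ.prob_unanimous, hu]
    · simp [hΦ.unanimous, degLottery, hhw.ne']
    let x : ι → Fin m := R.piecewise (fun _ => h) (T.piecewise (fun _ => w) fun _ => u)
    have hxR (i) (hi : i ∈ R) : x i = h := by simp [x, hi]
    have hxT (i) (hi : i ∈ T) : x i = w := by simp [x, hi, disjoint_right.1 hRT hi]
    have hxu (i) (hR : i ∉ R) (hT : i ∉ T) : x i = u := by simp [x, hR, hT]
    have hBx : (Φ ((R ∪ T)ᶜ.piecewise (fun _ => u) fun _ => h)).1 u = (Φ x).1 u := by
      refine hΦ.apply_eq_of_adj hhw hhu.ne' huw fun i => ?_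
      by_cases hR : i ∈ R <;> by_cases hT : i ∈ T <;> simp [hR, hT, hxR, hxT, hxu]
    have hCx : (Φ (T.piecewise (fun _ => w) fun _ => h)).1 w = (Φ x).1 w := by
      refine hΦ.apply_eq_of_adj hhu hhw.ne' huw.symm fun i => ?_
      by_cases hR : i ∈ R <;> by_cases hT : i ∈ T <;> grind [piecewise]
    have hRU (i) : i ∈ R ↔ x i ∈ U := by
      by_cases hR : i ∈ R
      · simp [hR, hxR, hh]
      · by_cases hT : i ∈ T <;> simp [hR, hT, hxT, hxu, hu, hw]
    rw [hBx, hCx, ← hA x hRU]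
    refine hΦ.prob_add_apply_add_apply hh hu hw huw hhu hhw fun i => ?_
    by_cases hR : i ∈ R <;> by_cases hT : i ∈ T <;> simp [hR, hT, hxR, hxT, hxu]
  refine ⟨fun i => A {i}, fun i => Lottery.prob_nonneg _ _, ?_, fun x => ?_⟩
  · rw [← hadd]
    simp [A, hΦ.prob_unanimous, hh]
  · rw [hA x fun i => mem_filter_univ i, hadd]

end EdgeRules

section HybridGraphs

variable {m : ℕ} {ι : Type*} [Fintype ι] {G : SimpleGraph (Fin m)} {p q k z : Fin m}

/-- The voters whose top-ranked alternative has index at least `k`: the set `S(k, P)` of the paper,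
for a profile `x` of top-ranked alternatives and `k` ranging over all natural numbers. -/
def voters (x : ι → Fin m) (k : ℕ) : Finset ι := {i | k ≤ (x i : ℕ)}

@[simp] theorem mem_voters {x : ι → Fin m} {k : ℕ} {i : ι} : i ∈ voters x k ↔ k ≤ (x i : ℕ) :=
  mem_filter_univ i

@[simp] theorem mem_downSet : z ∈ downSet k ↔ z ≤ k := mem_filter_univ z

@[simp] theorem mem_upSet : z ∈ upSet k ↔ k ≤ z := mem_filter_univ z

theorem sum_voters {M : Type*} [AddCommMonoid M] (ε : ι → M) (x : ι → Fin m) (k : ℕ) :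
    ∑ i ∈ voters x k, ε i = ∑ i with (x i : ℕ) = k, ε i + ∑ i ∈ voters x (k + 1), ε i := by
  simp only [voters, sum_filter, ← sum_add_distrib]
  refine sum_congr rfl fun i _ => ?_
  split_ifs <;> first | omega | simp

theorem voters_update [DecidableEq ι] (x : ι → Fin m) (i : ι) (a : Fin m) (k : ℕ) :
    voters (Function.update x i a) k
      = if k ≤ (a : ℕ) then insert i (voters x k) else (voters x k).erase i := by
  ext j
  rcases eq_or_ne j i with rfl | hj
  · split_ifs with hk <;> simp [hk]
  · split_ifs with hk <;> simp [hj]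

theorem isPendant_of_forall_reachable {U : Finset (Fin m)} {h s t : Fin m} (hh : h ∈ U)
    (hadj : ∀ a ∈ U, ∀ b ∉ U, G.Adj a b → a = h) (hs : s ∈ U)
    (hst : ∀ y, y ≠ h →
      (G.deleteIncidenceSet h).Reachable y s ∨ (G.deleteIncidenceSet h).Reachable y t) :
    IsPendant G U h := by
  have hreach (a) (ha : a ∉ U) : (G.deleteIncidenceSet h).Reachable a t := by
    refine (hst a fun hah => ha (hah ▸ hh)).resolve_left fun has => ?_
    refine ha ((eq_of_reachable (f := (· ∈ U)) (fun c d hcd => ?_) has).mpr hs)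
    obtain ⟨hcd, hc, hd⟩ := SimpleGraph.deleteIncidenceSet_adj.1 hcd
    exact propext ⟨fun hcU => by_contra fun hdU => hc (hadj c hcU d hdU hcd),
      fun hdU => by_contra fun hcU => hd (hadj d hdU c hcU hcd.symm)⟩
  exact ⟨hh, hadj, fun a ha b hb => (hreach a ha).trans (hreach b hb).symm⟩

variable [NeZero m]

namespace IsHybridGraph

theorem isPendant_downSet (hG : IsHybridGraph G p q) (hk : k ≤ p) :
    IsPendant G (downSet k) k := by
  refine isPendant_of_forall_reachable (mem_downSet.2 le_rfl) (fun a ha b hb hab => ?_)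
    (mem_downSet.2 (Fin.zero_le k)) fun y hy => hG.reachable_end y k hy
  rw [mem_downSet] at ha hb
  rcases hG.edge a b hab (ha.trans_lt (not_le.1 hb)) with hsucc | ⟨hpa, -⟩ <;> omega

theorem isPendant_upSet (hG : IsHybridGraph G p q) (hk : q ≤ k) :
    IsPendant G (upSet k) k := by
  refine isPendant_of_forall_reachable (mem_upSet.2 le_rfl) (fun a ha b hb hab => ?_)
    (mem_upSet.2 (le_lastAlt k)) fun y hy => (hG.reachable_end y k hy).symm
  rw [mem_upSet] at ha hb
  rcases hG.edge b a hab.symm ((not_le.1 hb).trans_le ha) with hsucc | ⟨-, haq⟩ <;> omega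

theorem exists_adj_downSet (hG : IsHybridGraph G p q) (hgap : (p : ℕ) + 1 < q) :
    ∃ u ∉ downSet p, ∃ w ∉ downSet p, u ≠ w ∧ G.Adj p u ∧ G.Adj p w := by
  have hpq : p < q := Fin.lt_def.2 (by omega)
  obtain ⟨walk⟩ := hG.preconnected p q
  obtain ⟨⟨⟨a, u⟩, hau⟩, -, ha, hu⟩ :=
    walk.exists_boundary_dart (downSet p) (by simp) (by simpa using hpq)
  obtain rfl : a = p := (hG.isPendant_downSet le_rfl).eq_of_adj a ha u hu hau
  have hu' : u ∉ downSet a := hu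
  rw [mem_downSet, not_le] at hu'
  have huq : u ≤ q := by rcases hG.edge a u hau hu' with h | h <;> omega
  obtain ⟨w, hw, hwu, haw⟩ := hG.exists_adj_ne hgap a ⟨le_rfl, by omega⟩ u ⟨hu'.le, huq⟩ hau
  exact ⟨u, hu, w, by simpa using hw.1.lt_of_ne haw.ne, hwu.symm, hau, haw⟩

theorem exists_adj_upSet (hG : IsHybridGraph G p q) (hgap : (p : ℕ) + 1 < q) :
    ∃ u ∉ upSet q, ∃ w ∉ upSet q, u ≠ w ∧ G.Adj q u ∧ G.Adj q w := by
  have hpq : p < q := Fin.lt_def.2 (by omega)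
  obtain ⟨walk⟩ := hG.preconnected q p
  obtain ⟨⟨⟨a, u⟩, hau⟩, -, ha, hu⟩ :=
    walk.exists_boundary_dart (upSet q) (by simp) (by simpa using hpq)
  obtain rfl : a = q := (hG.isPendant_upSet le_rfl).eq_of_adj a ha u hu hau
  have hu' : u ∉ upSet a := hu
  rw [mem_upSet, not_le] at hu'
  have hpu : p ≤ u := by rcases hG.edge u a hau.symm hu' with h | h <;> omega
  obtain ⟨w, hw, hwu, haw⟩ := hG.exists_adj_ne hgap a ⟨by omega, le_rfl⟩ u ⟨hpu, hu'.le⟩ hau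
  exact ⟨u, hu, w, by simpa using hw.2.lt_of_ne haw.ne', hwu.symm, hau, haw⟩

end IsHybridGraph

namespace IsEdgeRule

variable [DecidableEq ι] {Φ : (ι → Fin m) → Lottery m}

theorem exists_weights_ends (hΦ : IsEdgeRule G Φ) (hG : IsHybridGraph G p q)
    (hgap : (p : ℕ) + 1 < q) :
    ∃ ε : ι → ℝ, (∀ i, 0 ≤ ε i) ∧ ∑ i, ε i = 1 ∧ ∀ x,
      (Φ x).tail (p + 1) = ∑ i ∈ voters x (p + 1), ε i ∧
      (Φ x).tail q = ∑ i ∈ voters x q, ε i := by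
  obtain ⟨u, hu, w, hw, huw, hpu, hpw⟩ := hG.exists_adj_downSet hgap
  obtain ⟨ε, hε, hε1, hdown⟩ := hΦ.exists_weights_of_isPendant hG.preconnected
    (hG.isPendant_downSet le_rfl) hu hw huw hpu hpw
  obtain ⟨u, hu, w, hw, huw, hqu, hqw⟩ := hG.exists_adj_upSet hgap
  obtain ⟨δ, -, hδ1, hup⟩ := hΦ.exists_weights_of_isPendant hG.preconnected
    (hG.isPendant_upSet le_rfl) hu hw huw hqu hqw
  have htail_p (x : ι → Fin m) : (Φ x).tail (p + 1) = ∑ i ∈ voters x (p + 1), ε i := by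
    have hcompl : ∑ i with x i ∈ downSet p, ε i + ∑ i ∈ voters x (p + 1), ε i = 1 := by
      rw [← hε1, ← sum_filter_add_sum_filter_not univ (fun i => x i ∈ downSet p)]
      congr 2
      ext i
      simp
    linarith [hdown x, (Φ x).prob_downSet p]
  have htail_q (x : ι → Fin m) : (Φ x).tail q = ∑ i ∈ voters x q, δ i := by
    rw [← Lottery.prob_upSet, hup]
    congr 1
    ext i
    simp
  have hle (j : ι) : δ j ≤ ε j := by
    let x : ι → Fin m := Function.update (fun _ => 0) j (lastAlt m)
    have hx (k : ℕ) (h0 : 0 < k) (hk : k ≤ q) : voters x k = {j} := by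
      ext i
      rcases eq_or_ne i j with rfl | hij
      · simpa [x] using hk.trans (le_lastAlt q)
      · simp [x, hij, h0.ne']
    have := (Φ x).tail_antitone hgap.le
    rwa [htail_q, htail_p, hx q (by omega) le_rfl, hx _ (by omega) hgap.le, sum_singleton,
      sum_singleton] at this
  have hδε : δ = ε := funext fun j =>
    (sum_eq_sum_iff_of_le fun i _ => hle i).1 (hδ1.trans hε1.symm) j (mem_univ j)
  exact ⟨ε, hε, hε1, fun x => ⟨htail_p x, hδε ▸ htail_q x⟩⟩

/-- Moving the other voters around `z` to the two ends turns the bound into the difference of the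
tails at `p + 1` and `q`. -/
theorem apply_le_sum (hΦ : IsEdgeRule G Φ) (hG : IsHybridGraph G p q) {ε : ι → ℝ}
    (hε : ∀ x, (Φ x).tail (p + 1) = ∑ i ∈ voters x (p + 1), ε i ∧
      (Φ x).tail q = ∑ i ∈ voters x q, ε i) (x : ι → Fin m) (hpz : p < z) (hzq : z < q) :
    (Φ x).1 z ≤ ∑ i with x i = z, ε i := by
  have hend (y) (hy : y ≠ z) :
      ∃ e, (G.deleteIncidenceSet z).Reachable y e ∧ (e = 0 ∨ e = lastAlt m) :=
    (hG.reachable_end y z hy).elim (fun h => ⟨0, h, Or.inl rfl⟩) fun h => ⟨_, h, Or.inr rfl⟩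
  choose! e he using hend
  let y i := if x i = z then z else e (x i)
  have hxy : (Φ x).1 z = (Φ y).1 z := by
    refine hΦ.apply_eq_of_reachable fun i => ?_
    by_cases hi : x i = z
    · simp [y, hi]
    · simpa [y, hi] using (he _ hi).1
  have hsum : ∑ i ∈ voters y (p + 1), ε i - ∑ i ∈ voters y q, ε i = ∑ i with x i = z, ε i := by
    simp only [voters, sum_filter, ← sum_sub_distrib]
    refine sum_congr rfl fun i _ => ?_
    by_cases hi : x i = z
    · simp [y, hi, hzq, hpz]
    · rcases (he _ hi).2 with h | h
      · simp [y, hi, h, ((Fin.zero_le z).trans_lt hzq).ne']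
      · have hpm : (p : ℕ) < m - 1 := by omega
        have hqm : (q : ℕ) ≤ m - 1 := by omega
        simp [y, hi, h, lastAlt, hpm, hqm]
  rw [hxy, ← hsum, ← (hε y).1, ← (hε y).2]
  linarith [(Φ y).tail_eq_add z, (Φ y).tail_antitone (Nat.succ_le_of_lt hpz),
    (Φ y).tail_antitone (Nat.succ_le_of_lt hzq)]

theorem exists_weights (hΦ : IsEdgeRule G Φ) (hG : IsHybridGraph G p q)
    (hgap : (p : ℕ) + 1 < q) :
    ∃ ε : ι → ℝ, (∀ i, 0 ≤ ε i) ∧ ∑ i, ε i = 1 ∧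
      ∀ x, ∀ k ∈ Set.Ioc (p : ℕ) q, (Φ x).tail k = ∑ i ∈ voters x k, ε i := by
  obtain ⟨ε, hε, hε1, hends⟩ := hΦ.exists_weights_ends hG hgap
  refine ⟨ε, hε, hε1, fun x => eqOn_Icc_of_sub_le_sub (hends x).1 (hends x).2 fun k hk => ?_⟩
  let z : Fin m := ⟨k, hk.2.trans q.2⟩
  have hle := hΦ.apply_le_sum hG hends x (z := z) (Fin.lt_def.2 hk.1) (Fin.lt_def.2 hk.2)
  have hfiber : ∑ i with x i = z, ε i = ∑ i with (x i : ℕ) = k, ε i := by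
    simp only [Fin.ext_iff, z]
  linarith [(Φ x).tail_eq_add z, sum_voters ε x k]

theorem tail_eq_of_voters_eq (hΦ : IsEdgeRule G Φ) (hG : IsHybridGraph G p q) {k : ℕ}
    {x y : ι → Fin m} (hxy : voters x k = voters y k) : (Φ x).tail k = (Φ y).tail k := by
  have hiff (i) : k ≤ x i ↔ k ≤ y i := by simpa using Finset.ext_iff.1 hxy i
  rcases Nat.eq_zero_or_pos k with rfl | h0
  · simp
  rcases le_or_gt k (p + 1) with hkp | hpk
  · let j : Fin m := ⟨k - 1, by omega⟩
    have hj : (j : ℕ) + 1 = k := Nat.sub_add_cancel h0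
    have := hΦ.prob_eq_of_isPendant hG.preconnected (hG.isPendant_downSet (k := j) (by omega))
      (x := x) (y := y) fun i => by have := hiff i; simp only [mem_downSet]; omega
    rw [Lottery.prob_downSet, Lottery.prob_downSet, hj] at this
    linarith
  rcases le_or_gt k q with hkq | hqk
  · obtain ⟨ε, -, -, hε⟩ := hΦ.exists_weights hG (hpk.trans_le hkq)
    rw [hε x k ⟨by omega, hkq⟩, hε y k ⟨by omega, hkq⟩, hxy]
  rcases lt_or_ge k m with hkm | hmk
  · exact hΦ.prob_eq_of_isPendant hG.preconnected
      (hG.isPendant_upSet (k := ⟨k, hkm⟩) (Fin.le_def.2 hqk.le))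
      (x := x) (y := y) fun i => by simpa [Fin.le_def] using hiff i
  · rw [Lottery.tail_of_le _ hmk, Lottery.tail_of_le _ hmk]

end IsEdgeRule

end HybridGraphs

section Ballots

variable {m : ℕ} [NeZero m] {ι : Type*} [DecidableEq ι]

theorem IsEdgeRule.tail_update_mono [Finite ι] {G : SimpleGraph (Fin m)} {p q : Fin m}
    {Φ : (ι → Fin m) → Lottery m} (hΦ : IsEdgeRule G Φ) (hG : IsHybridGraph G p q)
    (x : ι → Fin m) (i : ι) {a b : Fin m} (hab : a ≤ b) (k : ℕ) :
    (Φ (Function.update x i a)).tail k ≤ (Φ (Function.update x i b)).tail k := by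
  cases nonempty_fintype ι
  have hvoters {c d : Fin m} (hcd : k ≤ c ↔ k ≤ d) :
      (Φ (Function.update x i c)).tail k = (Φ (Function.update x i d)).tail k := by
    refine hΦ.tail_eq_of_voters_eq hG (Finset.ext fun j => ?_)
    rcases eq_or_ne j i with rfl | hj
    · simpa using hcd
    · simp [hj]
  rw [Fin.le_def] at hab
  by_cases hk : k ≤ a ↔ k ≤ b
  · exact (hvoters hk).le
  · obtain ⟨walk⟩ := hG.preconnected a b
    obtain ⟨⟨⟨c, d⟩, hcd⟩, -, hc, hd⟩ :=
      walk.exists_boundary_dart {z | (z : ℕ) < k} (show (a : ℕ) < k by omega)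
        (show ¬(b : ℕ) < k by omega)
    simp only [Set.mem_ofPred_eq, not_lt] at hc hd
    rw [hvoters (c := a) (d := c) (by omega), hvoters (c := b) (d := d) (by omega)]
    exact hΦ.prob_le_of_adj x i hcd (by simpa using hc)

/-- The profile at which the voters in `S` top-rank the last alternative and all others the first;
the value of a rule at this profile is its probabilistic ballot for `S`. -/
def extremeProfile (m : ℕ) [NeZero m] (S : Finset ι) : ι → Fin m :=
  S.piecewise (fun _ => lastAlt m) fun _ => 0

theorem extremeProfile_insert (S : Finset ι) (i : ι) :
    extremeProfile m (insert i S) = Function.update (extremeProfile m S) i (lastAlt m) :=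
  piecewise_insert S _ _ i

theorem extremeProfile_eq_update {S : Finset ι} {i : ι} (hi : i ∉ S) :
    extremeProfile m S = Function.update (extremeProfile m S) i 0 := by
  rw [eq_comm, Function.update_eq_self_iff, extremeProfile, piecewise_eq_of_notMem _ _ _ hi]

variable [Fintype ι]

theorem voters_extremeProfile (S : Finset ι) {k : ℕ} (h0 : 0 < k) (hk : k < m) :
    voters (extremeProfile m S) k = S := by
  ext i
  have hlast : k ≤ m - 1 := by omega
  by_cases hi : i ∈ S <;> simp [extremeProfile, hi, lastAlt, hlast, h0.ne']

theorem voters_extremeProfile_voters (x : ι → Fin m) (k : ℕ) :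
    voters (extremeProfile m (voters x k)) k = voters x k := by
  ext i
  by_cases hi : k ≤ x i
  · simpa [extremeProfile, hi] using hi.trans (le_lastAlt (x i))
  · simpa [extremeProfile, hi] using (by omega : k ≠ 0)

theorem IsEdgeRule.tail_eq_tail_extremeProfile {G : SimpleGraph (Fin m)} {p q : Fin m}
    {Φ : (ι → Fin m) → Lottery m} (hΦ : IsEdgeRule G Φ) (hG : IsHybridGraph G p q)
    (x : ι → Fin m) (k : ℕ) :
    (Φ x).tail k = (Φ (extremeProfile m (voters x k))).tail k :=
  hΦ.tail_eq_of_voters_eq hG (voters_extremeProfile_voters x k).symm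

end Ballots

section BallotRepresentation

variable {m n : ℕ} {D : Set (Pref m)} {φ : Profile D n → Lottery m} {p q : Fin m}
  {β : Finset (Fin n) → Lottery m}

theorem constrainedRD_iff (hpq : p < q) : ConstrainedRD p q β ↔
    ∃ ε : Fin n → ℝ, (∀ i, 0 ≤ ε i) ∧ ∑ i, ε i = 1 ∧
      ∀ S, ∀ k ∈ Set.Ioc (p : ℕ) q, (β S).tail k = ∑ i ∈ S, ε i := by
  refine exists_congr fun ε => and_congr_right fun _ => and_congr_right fun hε1 =>
    forall_congr' fun S => ?_
  have hcompl : ∑ i ∈ S, ε i + ∑ i ∈ Sᶜ, ε i = 1 := by rw [sum_add_sum_compl, hε1]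
  rw [Lottery.prob_upSet, Lottery.prob_downSet]
  constructor
  · rintro ⟨hq, hp⟩ k ⟨hpk, hkq⟩
    linarith [(β S).tail_antitone hkq, (β S).tail_antitone (Nat.succ_le_of_lt hpk)]
  · intro h
    have hp := h (p + 1) ⟨by omega, by omega⟩
    exact ⟨h q ⟨hpq, le_rfl⟩, by linarith⟩

variable [NeZero m]

theorem tailProb_eq (β : Finset (Fin n) → Lottery m) (P : Profile D n) (k : ℕ) :
    tailProb β P k = (β (voters (topOf ∘ P) k)).tail k := by
  unfold tailProb
  split_ifs with hk
  · rfl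
  · rw [Lottery.tail_of_le _ (not_lt.1 hk)]

theorem isPFBRWith_iff : IsPFBRWith φ β ↔ BallotUnanimity β ∧ BallotMonotone β ∧
    ∀ P k, (φ P).tail k = (β (voters (topOf ∘ P) k)).tail k := by
  simp only [IsPFBRWith, ← tailProb_eq]
  refine and_congr_right fun _ => and_congr_right fun _ => forall_congr' fun P =>
    ⟨fun h k => ?_, fun h k => ?_⟩
  · induction k with
    | zero => rw [tailProb_eq, Lottery.tail_zero, Lottery.tail_zero]
    | succ k ih =>
      rcases lt_or_ge k m with hk | hk
      · linarith [(φ P).tail_eq_add ⟨k, hk⟩, h ⟨k, hk⟩]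
      · rw [tailProb_eq, Lottery.tail_of_le _ (by omega), Lottery.tail_of_le _ (by omega)]
  · rw [← h, ← h, (φ P).tail_eq_add, add_sub_cancel_right]

theorem isEdgeRule_of_strategyProof (hu : Unanimous φ) (hsp : StrategyProof φ)
    (htops : TopsOnly φ) {T : Fin m → D} (hT : ∀ a, topOf (T a) = a) :
    IsEdgeRule (strongGraph D) fun x => φ fun i => T (x i) := by
  have hupdate (x : Fin n → Fin m) (i) (a) (A : D) (hA : topOf A = a) :
      φ (fun j => T (Function.update x i a j)) = φ (Function.update (fun j => T (x j)) i A) := by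
    refine htops _ _ fun j => ?_
    rcases eq_or_ne j i with rfl | hj
    · simp [hT, hA]
    · simp [hj]
  refine ⟨fun a => hu _ a fun _ => hT a, fun x i a b hab z hza hzb => ?_, fun x i a b hab => ?_⟩
  all_goals
    obtain ⟨A, B, hA, hB, hswap⟩ := exists_isSwap_of_adj hab
    rw [hupdate x i a A hA, hupdate x i b B hB]
  · exact hsp.apply_eq_of_isSwap hswap _ i hza hzb
  · exact hsp.apply_le_of_isSwap hswap _ i

theorem exists_topOf_eq [Nontrivial (Fin m)] (hconn : (strongGraph D).Preconnected) (a : Fin m) :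
    ∃ A : D, topOf A = a := by
  obtain ⟨b, hab⟩ := hconn.exists_adj_of_nontrivial a
  obtain ⟨A, -, hA, -⟩ := exists_isSwap_of_adj hab
  exact ⟨A, hA⟩

theorem exists_isPFBRWith_of_strategyProof (hm : 3 ≤ m) (hnr : NoRestorationDomain D)
    (hstar : IsHybridStar D p q) (hpq : p < q) (hu : Unanimous φ) (hsp : StrategyProof φ) :
    ∃ β, IsPFBRWith φ β ∧ ((p : ℕ) + 1 < q → ConstrainedRD p q β) := by
  have hG := hstar.isHybridGraph hm
  have htops := topsOnly_of_unanimous_of_strategyProof hnr hu hsp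
  have : Nontrivial (Fin m) := Fin.nontrivial_iff_two_le.2 (by omega)
  choose T hT using exists_topOf_eq hG.preconnected
  have hΦ := isEdgeRule_of_strategyProof hu hsp htops hT
  have hφ (P : Profile D n) : φ P = φ fun i => T (topOf (P i)) := htops _ _ fun i => (hT _).symm
  refine ⟨fun S => φ fun i => T (extremeProfile m S i),
    isPFBRWith_iff.2 ⟨⟨?_, ?_⟩, fun S S' hSS' k => ?_, fun P k => ?_⟩, fun hgap => ?_⟩
  · simpa [extremeProfile] using hΦ.unanimous (lastAlt m)
  · simpa [extremeProfile] using hΦ.unanimous 0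
  · have hmono : Monotone fun S : Finset (Fin n) =>
        (φ fun i => T (extremeProfile m S i)).tail k :=
      monotone_iff_forall_le_insert.2 fun S i hi => by
        rw [extremeProfile_insert, extremeProfile_eq_update hi, Function.update_idem]
        exact hΦ.tail_update_mono hG _ i (Fin.zero_le _) k
    exact hmono hSS'.subset
  · rw [hφ]
    exact hΦ.tail_eq_tail_extremeProfile hG _ k
  · obtain ⟨ε, hε, hε1, htail⟩ := hΦ.exists_weights hG hgap
    refine (constrainedRD_iff hpq).2 ⟨ε, hε, hε1, fun S k hk => ?_⟩
    rw [htail _ k hk, voters_extremeProfile S (by grind) (by grind)]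

end BallotRepresentation

section RightShifts

variable {m : ℕ} {lam mu : Lottery m} {x y p q : Fin m} {P : Pref m}

theorem topSum_eq_sum (lam : Lottery m) (P : Pref m) (k : ℕ) :
    topSum lam P k = ∑ z, (if (P.symm z : ℕ) < k then 1 else 0) * lam.1 z := by
  simp only [topSum_eq_prob, Lottery.prob, sum_filter, ite_mul, one_mul, zero_mul]

theorem Prefers.indicator_le {a b : Fin m} (h : Prefers P a b) (k : ℕ) :
    (if (P.symm b : ℕ) < k then (1 : ℝ) else 0) ≤ if (P.symm a : ℕ) < k then 1 else 0 := by
  rw [Prefers, Fin.lt_def] at h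
  split_ifs <;> first | omega | norm_num

variable [NeZero m]

theorem Lottery.sum_mul_sub_sum_mul (lam mu : Lottery m) (u : Fin m → ℝ) :
    ∑ z, u z * mu.1 z - ∑ z, u z * lam.1 z
      = ∑ k ∈ range m, (u (Fin.ofNat m (k + 1)) - u (Fin.ofNat m k)) *
          (mu.tail (k + 1) - lam.tail (k + 1)) := by
  have habel := sum_mul_sub_succ (fun k => u (Fin.ofNat m k))
    (fun k => mu.tail k - lam.tail k) m
  simp only [tail_zero, tail_of_le _ le_rfl, sub_self, mul_zero, zero_add] at habel
  rw [← habel, sum_range, ← sum_sub_distrib]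
  refine sum_congr rfl fun z _ => ?_
  rw [Fin.ofNat_val_eq_self, mu.tail_eq_add, lam.tail_eq_add]
  ring

/-- How the lottery of a `(p, q)`-PFBR reacts when a voter's top-ranked alternative moves from `x`
up to `y`: tails do not decrease, they change only between `x` and `y`, and between `p` and `q` they
all change by the same amount, the dictatorial coefficient of the voter. -/
structure IsRightShift (lam mu : Lottery m) (x y p q : Fin m) : Prop where
  tail_le : ∀ k, lam.tail k ≤ mu.tail k
  tail_eq : ∀ k ∉ Set.Ioc (x : ℕ) y, lam.tail k = mu.tail k
  exists_sub_eq : ∃ c, ∀ k ∈ Set.Ioc (x : ℕ) y, k ∈ Set.Ioc (p : ℕ) q →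
    mu.tail k - lam.tail k = c

namespace IsRightShift

/-- After summation by parts, the increments of `u` are weighted by the increases of the tails. -/
theorem sum_mul_le (h : IsRightShift lam mu x y p q) {u : Fin m → ℝ}
    (hside : ∀ a b : Fin m, x ≤ a → (b : ℕ) = a + 1 → b ≤ y → b ≤ p ∨ q ≤ a → u b ≤ u a)
    (hmid : max x p < min y q → u (min y q) ≤ u (max x p)) :
    ∑ z, u z * mu.1 z ≤ ∑ z, u z * lam.1 z := by
  obtain ⟨c, hc⟩ := h.exists_sub_eq
  have hval {k : ℕ} (hk : k < m) : (Fin.ofNat m k : ℕ) = k := Nat.mod_eq_of_lt hk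
  have hmem {k : ℕ} : k ∈ Ico (max x p : Fin m).val (min y q : Fin m).val ↔
      k + 1 ∈ Set.Ioc (x : ℕ) y ∧ k + 1 ∈ Set.Ioc (p : ℕ) q := by
    simp only [mem_Ico, Set.mem_Ioc, Fin.coe_max, Fin.coe_min]
    omega
  rw [← sub_nonpos, lam.sum_mul_sub_sum_mul]
  refine sum_sub_mul_nonpos (v := fun k => u (Fin.ofNat m k))
    (d := fun k => mu.tail k - lam.tail k) (min y q : Fin m).2.le
    (fun k => sub_nonneg.2 (h.tail_le k)) (fun k hk => ?_)
    (fun k hk => hc (k + 1) (hmem.1 hk).1 (hmem.1 hk).2) fun hlt => ?_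
  · by_cases hxy : k + 1 ∈ Set.Ioc (x : ℕ) y
    · refine mul_nonpos_of_nonpos_of_nonneg (sub_nonpos.2 ?_) (sub_nonneg.2 (h.tail_le (k + 1)))
      have hpq : k + 1 ∉ Set.Ioc (p : ℕ) q := fun hpq => hk (hmem.2 ⟨hxy, hpq⟩)
      rw [Set.mem_Ioc] at hxy hpq
      have hk0 := hval (k := k) (by omega)
      have hk1 := hval (k := k + 1) (by omega)
      exact hside _ _ (by omega) (by omega) (by omega) (by omega)
    · rw [h.tail_eq _ hxy, sub_self, mul_zero]
  · simpa only [Fin.ofNat_val_eq_self] using hmid hlt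

theorem topSum_le_of_top_left (h : IsRightShift lam mu x y p q) (hP : IsHybridPref p q P)
    (hx : P 0 = x) (k : ℕ) : topSum mu P k ≤ topSum lam P k := by
  subst hx
  rw [topSum_eq_sum, topSum_eq_sum]
  refine h.sum_mul_le (fun a b ha hab _ hside => ?_) fun hlt => ?_
  · exact (hP.prefers_of_lt ha (Fin.lt_def.2 (by omega)) hside).indicator_le k
  · exact (hP.prefers_max hlt (min_le_right _ _)).indicator_le k

theorem topSum_le_of_top_right (h : IsRightShift lam mu x y p q) (hP : IsHybridPref p q P)
    (hy : P 0 = y) (k : ℕ) : topSum lam P k ≤ topSum mu P k := by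
  subst hy
  rw [topSum_eq_sum, topSum_eq_sum, ← neg_le_neg_iff, ← sum_neg_distrib, ← sum_neg_distrib]
  simp only [← neg_mul]
  refine h.sum_mul_le (fun a b _ hab hb hside => ?_) fun hlt => ?_
  · exact neg_le_neg ((hP.prefers_of_gt hb (Fin.lt_def.2 (by omega)) hside).indicator_le k)
  · exact neg_le_neg ((hP.prefers_min (le_max_right _ _) hlt).indicator_le k)

end IsRightShift

end RightShifts

section FixedBallotRules

variable {m n : ℕ} {D : Set (Pref m)} {φ : Profile D n → Lottery m} {p q : Fin m}
  {β : Finset (Fin n) → Lottery m}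

theorem BallotMonotone.tail_le (hβ : BallotMonotone β) {S T : Finset (Fin n)} (hST : S ⊆ T)
    (k : ℕ) : (β S).tail k ≤ (β T).tail k := by
  rcases hST.eq_or_ssubset with rfl | hST
  · exact le_rfl
  rcases lt_or_ge k m with hk | hk
  · exact hβ S T hST ⟨k, hk⟩
  · rw [Lottery.tail_of_le _ hk, Lottery.tail_of_le _ hk]

variable [NeZero m]

theorem IsPFBRWith.unanimous (hφ : IsPFBRWith φ β) : Unanimous φ := by
  obtain ⟨⟨huniv, hempty⟩, -, htail⟩ := isPFBRWith_iff.1 hφ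
  intro P a ha
  refine Lottery.ext_tail fun k hk => ?_
  have hlast : k ≤ (lastAlt m : ℕ) := Nat.le_sub_one_of_lt hk
  have hvoters : voters (topOf ∘ P) k = if k ≤ (a : ℕ) then univ else ∅ := by
    ext i
    split_ifs with hka <;> simp [ha, hka]
  rw [htail, hvoters, degLottery_tail]
  split_ifs with hka
  · rw [huniv, degLottery_tail, if_pos hlast]
  · rw [hempty, degLottery_tail, if_neg fun h0 => hka (h0.trans (Fin.zero_le a))]

theorem IsPFBRWith.isRightShift (hφ : IsPFBRWith φ β)
    (hRD : (p : ℕ) + 1 < q → ConstrainedRD p q β) (X : Profile D n) (i : Fin n) {A B : D}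
    (hAB : topOf A ≤ topOf B) :
    IsRightShift (φ (Function.update X i A)) (φ (Function.update X i B)) (topOf A) (topOf B)
      p q := by
  obtain ⟨-, hmono, htail⟩ := isPFBRWith_iff.1 hφ
  let V (k : ℕ) := voters (topOf ∘ X) k
  have htail' (C : D) (k : ℕ) : (φ (Function.update X i C)).tail k
      = (β (if k ≤ (topOf C : ℕ) then insert i (V k) else (V k).erase i)).tail k := by
    rw [htail, Function.comp_update, voters_update]
  rw [Fin.le_def] at hAB
  refine ⟨fun k => ?_, fun k hk => ?_, ?_⟩
  · rw [htail', htail']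
    refine hmono.tail_le ?_ k
    split_ifs <;> first | omega | grind
  · have hiff : k ≤ topOf A ↔ k ≤ topOf B := by
      rw [Set.mem_Ioc] at hk
      omega
    rw [htail', htail', if_congr hiff rfl rfl]
  by_cases hgap : (p : ℕ) + 1 < q
  · obtain ⟨ε, -, -, hε⟩ := (constrainedRD_iff (by omega)).1 (hRD hgap)
    refine ⟨ε i, fun k hk hpq => ?_⟩
    rw [htail', htail', if_neg hk.1.not_ge, if_pos hk.2, hε _ k hpq, hε _ k hpq,
      ← add_sum_erase _ ε (mem_insert_self i _), erase_insert_eq_erase, add_sub_cancel_right]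
  · refine ⟨(φ (Function.update X i B)).tail q - (φ (Function.update X i A)).tail q,
      fun k _ hpq => ?_⟩
    have hkq : k = q := by
      rw [Set.mem_Ioc] at hpq
      omega
    rw [hkq]

theorem IsPFBRWith.strategyProof (hφ : IsPFBRWith φ β) (hD : D ⊆ hybridDomain p q)
    (hRD : (p : ℕ) + 1 < q → ConstrainedRD p q β) : StrategyProof φ := by
  intro i X B k _
  have hX : φ X = φ (Function.update X i (X i)) := by rw [Function.update_eq_self]
  rw [hX]
  rcases le_total (topOf (X i)) (topOf B) with hle | hle
  · exact (hφ.isRightShift hRD X i hle).topSum_le_of_top_left (hD (X i).2) rfl k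
  · exact (hφ.isRightShift hRD X i hle).topSum_le_of_top_right (hD (X i).2) rfl k

end FixedBallotRules

end PFBRPaper

theorem rule_characterization_general {m n : ℕ} [NeZero m] (hm : 3 ≤ m) {D : Set (Pref m)}
    {p q : Fin m} (hpq : p < q) (hnr : NoRestorationDomain D) (hstar : IsHybridStar D p q)
    (φ : Profile D n → Lottery m) :
    (Unanimous φ ∧ StrategyProof φ) ↔
      (IsPFBR φ ∧ ((p : ℕ) + 1 < (q : ℕ) →
        ∃ β, IsPFBRWith φ β ∧ ConstrainedRD p q β)) := by
  constructor
  · rintro ⟨hu, hsp⟩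
    obtain ⟨β, hφ, hRD⟩ := exists_isPFBRWith_of_strategyProof hm hnr hstar hpq hu hsp
    exact ⟨⟨β, hφ⟩, fun hgap => ⟨β, hφ, hRD hgap⟩⟩
  · rintro ⟨⟨β, hφ⟩, hgap_imp⟩
    refine ⟨hφ.unanimous, ?_⟩
    by_cases hgap : (p : ℕ) + 1 < q
    · obtain ⟨β', hφ', hRD⟩ := hgap_imp hgap
      exact hφ'.strategyProof hstar.1 fun _ => hRD
    · exact hφ.strategyProof hstar.1 fun h => absurd h hgap

/-- On a regular `(p,q)`-hybrid* domain, a RSCF is unanimous and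
strategy-proof iff it is a PFBR, and moreover a `(p,q)`-PFBR when `q - p > 1`. -/
theorem rule_characterization (m n : ℕ) [NeZero m] (hm : 3 ≤ m) (hn : 2 ≤ n)
    (D : Set (Pref m)) (p q : Fin m) (hpq : p < q)
    (hreg : RegularDomain D) (hstar : IsHybridStar D p q)
    (φ : Profile D n → Lottery m) :
    (Unanimous φ ∧ StrategyProof φ) ↔
      (IsPFBR φ ∧ ((p : ℕ) + 1 < (q : ℕ) →
        ∃ β, IsPFBRWith φ β ∧ ConstrainedRD p q β)) :=
  rule_characterization_general hm hpq hreg.2.2 hstar φ
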